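/- arXiv:2509.11710 — 2 statements merged into one kernel-verified Lean document; each statement's English description precedes it below -/
import Mathlib

section
/- Let d ≥ 5. For every sufficiently small ε > 0 there exists a compact subset F of the standard paraboloid P_d = {(x̄, |x̄|²) : x̄ ∈ ℝ^{d−1}} ⊆ ℝ^d such that the Hausdorff dimension of F is at least (d−3)/2 − ε and the dot product set Π(F) has one-dimensional Lebesgue measure zero. -/
/-!
The dot product of the points of the paraboloid above `u` and `v` is `u · v + |u|² |v|²`. If
`u = a / q` and `v = b / q` with integer vectors `a`, `b` satisfying `|a|² ≡ |b|² ≡ 0 (mod q)`, this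
number lies in `q⁻² ℤ`. For `q` prime, `m := d - 3` of the `d - 1 = m + 2` coordinates of `a` can be
prescribed freely, since every residue is a sum of two squares mod `q` (`exists_completion`). This
gives `q ^ m` points whose dot products occupy only about `q²` values. Thickening each point to a
cube of side slightly below `q⁻²` leaves a dot product set of small measure, and produces dimension
close to `m / 2 = (d - 3) / 2`.

Iterating the construction gives a Cantor set. Inside each cube of side `1 / M k` at level `k`, take
the corners of the next cubes to be the corner of the given cube plus `a / (M k * p k)`, with
`p k ∣ |a|²`. Since the old corner has denominator `M k`, the squared norm of the new corner still
has denominator `M k ^ 2 * p k`, only one factor of `p k` (`Scheme.norm_sq_X`), so the dot products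
of corners lie in `(M k ^ 4 * p k ^ 2)⁻¹ ℤ` (`Scheme.pdot_X`). The new side is
`1 / M (k + 1) = 1 / (M k * p k ^ 2 * c k)` with `c k = (k + 2) * M k ^ 3`, and the measure of
the dot product set is `O(M k ^ 3 / c k)`, which tends to zero (`Scheme.volume_pdot`).

For the dimension, the free digits are those of the mixed radix expansion of a point `t` of a cube in
`ℝ^m`, with bases `p 0, p 1, …`. Taking `c k ^ J ≤ p k`, the map sending the Cantor point back to `t`
is Hölder with exponent `J / (2 J + 1)` (`Scheme.dist_le_holder`), so the Cantor set has dimension at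
least `m J / (2 J + 1)`, which tends to `m / 2` as `J → ∞`.
-/

open MeasureTheory
open scoped RealInnerProductSpace ENNReal

/-- The standard paraboloid `P_d = {(x̄, |x̄|²) : x̄ ∈ ℝ^{d-1}}` in `ℝ^d`. -/
def stdParaboloid (d : ℕ) : Set (EuclideanSpace ℝ (Fin d)) :=
  {p | ∃ x : EuclideanSpace ℝ (Fin (d - 1)),
    p = fun i : Fin d => if h : (i : ℕ) < d - 1 then x ⟨i, h⟩ else ‖x‖ ^ 2}

/-- The dot product set `Π(E) = {x · y : x, y ∈ E}`. -/
def dotSet {d : ℕ} (E : Set (EuclideanSpace ℝ (Fin d))) : Set ℝ :=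
  {t | ∃ x ∈ E, ∃ y ∈ E, ⟪x, y⟫ = t}

/-! ### Parameters of the construction -/

/-- Parameters of the Cantor construction in `ℝ^(m+2)`: level-`k` cubes have side `1 / M k`; the
`m` free digits of step `k` range over `{0, …, p k - 1}`, and
`P k = p 0 * ⋯ * p (k - 1)`. The vector `A k a` completes the free digits `a` by two further digits so that its
squared norm is divisible by `p k`. The exponent `J` measures how small the extra factor `c k` is
relative to `p k`. -/
structure Scheme (m J : ℕ) where
  M : ℕ → ℕ
  P : ℕ → ℕ
  c : ℕ → ℕ
  p : ℕ → ℕ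
  A : ℕ → (Fin m → ℕ) → Fin (m + 2) → ℕ
  M_zero : M 0 = 1
  P_zero : P 0 = 1
  M_succ : ∀ k, M (k + 1) = M k * p k ^ 2 * c k
  P_succ : ∀ k, P (k + 1) = P k * p k
  c_eq : ∀ k, c k = (k + 2) * M k ^ 3
  prime : ∀ k, (p k).Prime
  c_pow_le : ∀ k, c k ^ J ≤ p k
  A_castAdd : ∀ k a i, A k a (Fin.castAdd 2 i) = a i
  A_lt : ∀ k a, (∀ i, a i < p k) → ∀ j, A k a j < p k
  A_dvd : ∀ k a, p k ∣ ∑ j, A k a j ^ 2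

/-- Free digits `a` can be completed by two more digits to a vector whose squared norm vanishes
mod `p`, because `-|a|²` is a sum of two squares in `ZMod p`. -/
theorem exists_completion (m p : ℕ) (hp : p.Prime) :
    ∃ A : (Fin m → ℕ) → Fin (m + 2) → ℕ,
      (∀ a i, A a (Fin.castAdd 2 i) = a i) ∧
      (∀ a, (∀ i, a i < p) → ∀ j, A a j < p) ∧
      (∀ a, p ∣ ∑ j, A a j ^ 2) := by
  have : Fact p.Prime := ⟨hp⟩
  have key : ∀ a : Fin m → ℕ, ∃ u v : ZMod p, u ^ 2 + v ^ 2 = -(∑ i, (a i : ZMod p) ^ 2) :=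
    fun a => ZMod.sq_add_sq p _
  choose u v huv using key
  refine ⟨fun a => Fin.append a ![(u a).val, (v a).val], ?_, ?_, ?_⟩
  · intro a i
    simp
  · intro a ha j
    refine Fin.addCases (fun i => ?_) (fun i => ?_) j
    · simpa using ha i
    · simp only [Fin.append_right]
      fin_cases i
      · exact ZMod.val_lt _
      · exact ZMod.val_lt _
  · intro a
    rw [← ZMod.natCast_eq_zero_iff, Fin.sum_univ_add]
    simp only [Fin.append_left, Fin.append_right]
    push_cast
    simp [Fin.sum_univ_two, huv]

/-- The parameters are chosen recursively: `M k` determines `c k`, and then any prime `p k` that is at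
least `c k ^ J` will do. -/
theorem exists_scheme (m J : ℕ) : Nonempty (Scheme m J) := by
  choose q hq hqp using fun n : ℕ => Nat.exists_infinite_primes n
  let c : ℕ → ℕ → ℕ := fun k M => (k + 2) * M ^ 3
  let M : ℕ → ℕ := fun k => Nat.rec 1 (fun k M => M * q (c k M ^ J) ^ 2 * c k M) k
  let p : ℕ → ℕ := fun k => q (c k (M k) ^ J)
  choose A hA using fun k => exists_completion m (p k) (hqp _)
  exact ⟨{
    M := M
    P := fun k => ∏ i ∈ Finset.range k, p i
    c := fun k => c k (M k)
    p := p
    A := A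
    M_zero := rfl
    P_zero := by simp
    M_succ := fun k => rfl
    P_succ := fun k => Finset.prod_range_succ _ _
    c_eq := fun k => rfl
    prime := fun k => hqp _
    c_pow_le := fun k => hq _
    A_castAdd := fun k => (hA k).1
    A_lt := fun k => (hA k).2.1
    A_dvd := fun k => (hA k).2.2 }⟩

namespace Scheme

variable {m J : ℕ} (S : Scheme m J)

theorem p_pos (k : ℕ) : 0 < S.p k := (S.prime k).pos

theorem M_pos (k : ℕ) : 0 < S.M k := by
  induction k with
  | zero => simp [S.M_zero]
  | succ k ih =>
    have := S.p_pos k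
    rw [S.M_succ, S.c_eq]
    positivity

theorem c_ge (k : ℕ) : 2 ≤ S.c k := by
  have := Nat.pow_pos (n := 3) (S.M_pos k)
  rw [S.c_eq]
  nlinarith

theorem P_ge (k : ℕ) : 2 ^ k ≤ S.P k := by
  induction k with
  | zero => simp [S.P_zero]
  | succ k ih =>
    rw [S.P_succ, pow_succ]
    exact Nat.mul_le_mul ih (S.prime k).two_le

theorem P_pos (k : ℕ) : 0 < S.P k := lt_of_lt_of_le (by positivity) (S.P_ge k)

/-- Up to the factors `c`, `M k` is the square of `P k`; this is the comparison of scales that gives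
the Hölder exponent `J / (2 J + 1)`. -/
theorem M_pow_le (k : ℕ) : S.M k ^ J ≤ S.P k ^ (2 * J + 1) := by
  induction k with
  | zero => simp [S.M_zero, S.P_zero]
  | succ k ih =>
    calc S.M (k + 1) ^ J = S.M k ^ J * S.p k ^ (2 * J) * S.c k ^ J := by
          rw [S.M_succ, mul_pow, mul_pow, ← pow_mul]
      _ ≤ S.P k ^ (2 * J + 1) * S.p k ^ (2 * J) * S.p k := by
          gcongr
          exact S.c_pow_le k
      _ = S.P (k + 1) ^ (2 * J + 1) := by
          rw [S.P_succ, mul_pow]; ring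

/-! ### Digits and Cantor points -/

/-- The integer formed by the first `k` mixed radix digits of `t i` (for `t i ∈ [0, 1)`). -/
noncomputable def N (k : ℕ) (t : Fin m → ℝ) (i : Fin m) : ℕ := ⌊(S.P k : ℝ) * t i⌋₊

/-- The `k`-th mixed radix digit of `t i`, in base `p k`. -/
noncomputable def digit (k : ℕ) (t : Fin m → ℝ) (i : Fin m) : ℕ := S.N (k + 1) t i % S.p k

theorem digit_lt (k : ℕ) (t : Fin m → ℝ) (i : Fin m) : S.digit k t i < S.p k :=
  Nat.mod_lt _ (S.p_pos k)

theorem N_succ (k : ℕ) (t : Fin m → ℝ) (i : Fin m) :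
    S.N (k + 1) t i = S.p k * S.N k t i + S.digit k t i := by
  have h : S.N k t i = S.N (k + 1) t i / S.p k := by
    unfold N
    rw [← Nat.floor_div_natCast, S.P_succ]
    congr 1
    have : (S.p k : ℝ) ≠ 0 := by exact_mod_cast (S.p_pos k).ne'
    push_cast
    field_simp
  rw [h, digit, Nat.div_add_mod]

/-- Numerators, over the denominator `M k`, of the corner of the level-`k` cube attached to the first
`k` digits of `t`. -/
noncomputable def V (t : Fin m → ℝ) : ℕ → Fin (m + 2) → ℕ
  | 0, _ => 0
  | k + 1, j => (V t k j * S.p k + S.A k (S.digit k t) j) * (S.p k * S.c k)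

/-- The corner of the level-`k` cube attached to the first `k` digits of `t`. -/
noncomputable def X (k : ℕ) (t : Fin m → ℝ) (j : Fin (m + 2)) : ℝ := S.V t k j / S.M k

theorem X_zero (t : Fin m → ℝ) (j : Fin (m + 2)) : S.X 0 t j = 0 := by simp [X, V]

/-- The level-`k + 1` corner in lower terms: its denominator divides `M k * p k`. -/
theorem X_succ' (k : ℕ) (t : Fin m → ℝ) (j : Fin (m + 2)) :
    S.X (k + 1) t j =
      ((S.V t k j * S.p k + S.A k (S.digit k t) j : ℕ) : ℝ) / (S.M k * S.p k) := by
  have h1 : (S.p k : ℝ) ≠ 0 := by exact_mod_cast (S.p_pos k).ne'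
  have h2 : (S.M k : ℝ) ≠ 0 := by exact_mod_cast (S.M_pos k).ne'
  have h3 : (S.c k : ℝ) ≠ 0 := by exact_mod_cast (by have := S.c_ge k; omega)
  simp only [X, V, S.M_succ]
  push_cast
  field_simp

theorem X_succ (k : ℕ) (t : Fin m → ℝ) (j : Fin (m + 2)) :
    S.X (k + 1) t j = S.X k t j + S.A k (S.digit k t) j / (S.M k * S.p k) := by
  have h1 : (S.p k : ℝ) ≠ 0 := by exact_mod_cast (S.p_pos k).ne'
  have h2 : (S.M k : ℝ) ≠ 0 := by exact_mod_cast (S.M_pos k).ne'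
  rw [X_succ', X]
  push_cast
  field_simp

theorem X_mono (t : Fin m → ℝ) (j : Fin (m + 2)) : Monotone fun k => S.X k t j := by
  refine monotone_nat_of_le_succ fun k => ?_
  rw [X_succ]
  have : (0 : ℝ) ≤ S.A k (S.digit k t) j / (S.M k * S.p k) := by positivity
  linarith

theorem M_succ_ge (k : ℕ) : 2 * (S.M k * S.p k : ℝ) ≤ S.M (k + 1) := by
  have h : 2 * (S.M k * S.p k) ≤ S.M (k + 1) := by
    rw [S.M_succ]
    calc 2 * (S.M k * S.p k) = S.M k * S.p k * 1 * 2 := by ring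
      _ ≤ S.M k * S.p k * S.p k * S.c k := by
        gcongr
        · exact S.p_pos k
        · exact S.c_ge k
      _ = _ := by ring
  exact_mod_cast h

theorem inv_M_succ_le (k : ℕ) : (1 : ℝ) / S.M (k + 1) ≤ 1 / (2 * (S.M k * S.p k)) := by
  have h1 : (0 : ℝ) < S.p k := by exact_mod_cast S.p_pos k
  have h2 : (0 : ℝ) < S.M k := by exact_mod_cast S.M_pos k
  exact one_div_le_one_div_of_le (by positivity) (S.M_succ_ge k)

/-- The upper corners of the cubes decrease: the cubes are nested. -/
theorem X_anti (t : Fin m → ℝ) (j : Fin (m + 2)) :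
    Antitone fun k => S.X k t j + 1 / S.M k := by
  refine antitone_nat_of_succ_le fun k => ?_
  have h1 : (0 : ℝ) < S.p k := by exact_mod_cast S.p_pos k
  have h2 : (0 : ℝ) < S.M k := by exact_mod_cast S.M_pos k
  have h3 := S.inv_M_succ_le k
  have h4 : (S.A k (S.digit k t) j : ℝ) + 1 ≤ S.p k := by
    exact_mod_cast S.A_lt k _ (S.digit_lt k t) j
  have h5 : (1 : ℝ) / (2 * (S.M k * S.p k)) ≤ 1 / (S.M k * S.p k) :=
    one_div_le_one_div_of_le (by positivity) (by nlinarith [mul_pos h2 h1])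
  have h6 : ((S.A k (S.digit k t) j : ℝ) + 1) / (S.M k * S.p k) ≤ 1 / S.M k := by
    rw [div_le_div_iff₀ (by positivity) h2]
    nlinarith
  rw [add_div] at h6
  simp only [X_succ]
  linarith

/-- The point common to all cubes attached to `t`; the corners increase to it and are bounded, so the
supremum is a genuine one. -/
noncomputable def x (t : Fin m → ℝ) (j : Fin (m + 2)) : ℝ := ⨆ k, S.X k t j

theorem X_le_add (k l : ℕ) (t : Fin m → ℝ) (j : Fin (m + 2)) :
    S.X l t j ≤ S.X k t j + 1 / S.M k := by
  rcases le_total l k with h | h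
  · have h1 : S.X l t j ≤ S.X k t j := S.X_mono t j h
    have : (0 : ℝ) ≤ 1 / S.M k := by positivity
    linarith
  · have h1 : S.X l t j + 1 / S.M l ≤ S.X k t j + 1 / S.M k := S.X_anti t j h
    have : (0 : ℝ) ≤ 1 / S.M l := by positivity
    linarith

theorem X_le_x (k : ℕ) (t : Fin m → ℝ) (j : Fin (m + 2)) : S.X k t j ≤ S.x t j :=
  le_ciSup (f := fun k => S.X k t j)
    ⟨S.X 0 t j + 1 / S.M 0, by rintro _ ⟨l, rfl⟩; exact S.X_le_add 0 l t j⟩ k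

theorem x_le (k : ℕ) (t : Fin m → ℝ) (j : Fin (m + 2)) : S.x t j ≤ S.X k t j + 1 / S.M k :=
  ciSup_le fun l => S.X_le_add k l t j

theorem x_mem (t : Fin m → ℝ) (j : Fin (m + 2)) : 0 ≤ S.x t j ∧ S.x t j ≤ 1 := by
  have h1 := S.X_le_x 0 t j
  have h2 := S.x_le 0 t j
  simp only [X_zero, S.M_zero] at h1 h2
  norm_num at h2
  exact ⟨h1, h2⟩

theorem V_congr {k : ℕ} {t s : Fin m → ℝ} (h : ∀ l ≤ k, S.N l t = S.N l s) :
    S.V t k = S.V s k := by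
  induction k with
  | zero => rfl
  | succ k ih =>
    have h1 : S.digit k t = S.digit k s := by
      funext i
      simp only [digit, h (k + 1) le_rfl]
    funext j
    simp only [V, h1, ih fun l hl => h l (by omega)]

/-! ### The Hölder estimate -/

/-- If `t` and `s` first differ at digit `k`, the gaps between the level-`k + 1` cubes keep the two
Cantor points apart in proportion to the difference of the digits. -/
theorem abs_x_sub_ge {k : ℕ} {t s : Fin m → ℝ} (h : ∀ l ≤ k, S.N l t = S.N l s) (i : Fin m)
    (hi : S.digit k t i ≠ S.digit k s i) :
    |(S.digit k t i : ℝ) - S.digit k s i| / (2 * (S.M k * S.p k)) ≤ dist (S.x t) (S.x s) := by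
  have h1 : (0 : ℝ) < S.p k := by exact_mod_cast S.p_pos k
  have h2 : (0 : ℝ) < S.M k := by exact_mod_cast S.M_pos k
  set j := Fin.castAdd 2 i
  refine le_trans ?_ (dist_le_pi_dist (S.x t) (S.x s) j)
  rw [Real.dist_eq]
  have e0 : S.X k t j = S.X k s j := by rw [X, X, S.V_congr h]
  have e1 := S.X_succ k t j
  have e2 := S.X_succ k s j
  rw [S.A_castAdd] at e1 e2
  have hone : (1 : ℝ) ≤ |(S.digit k t i : ℝ) - S.digit k s i| := by
    have : (1 : ℤ) ≤ |(S.digit k t i : ℤ) - S.digit k s i| := by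
      apply Int.one_le_abs; omega
    exact_mod_cast this
  have b1 := S.X_le_x (k + 1) t j
  have b2 := S.x_le (k + 1) t j
  have b3 := S.X_le_x (k + 1) s j
  have b4 := S.x_le (k + 1) s j
  have b5 := S.inv_M_succ_le k
  have b6 : (1 : ℝ) / (2 * (S.M k * S.p k)) ≤
      |(S.digit k t i : ℝ) - S.digit k s i| / (2 * (S.M k * S.p k)) := by gcongr
  have b7 : |(S.digit k t i : ℝ) - S.digit k s i| / (S.M k * S.p k) =
      |S.X (k + 1) t j - S.X (k + 1) s j| := by
    rw [e1, e2, e0, add_sub_add_left_eq_sub, ← sub_div, abs_div, abs_of_pos (mul_pos h2 h1)]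
  have b8 : |(S.digit k t i : ℝ) - S.digit k s i| / (S.M k * S.p k) =
      2 * (|(S.digit k t i : ℝ) - S.digit k s i| / (2 * (S.M k * S.p k))) := by
    field_simp
  have b9 : |S.X (k + 1) t j - S.X (k + 1) s j| ≤
      |S.x t j - S.x s j| + 1 / S.M (k + 1) := by
    rw [abs_le]
    constructor <;> cases abs_cases (S.x t j - S.x s j) <;> linarith
  linarith

theorem abs_sub_le {k : ℕ} {t s : Fin m → ℝ} {i : Fin m} (ht : 0 ≤ t i) (hs : 0 ≤ s i)
    (h : S.N k t i = S.N k s i) :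
    |t i - s i| ≤ (|(S.digit k t i : ℝ) - S.digit k s i| + 1) / S.P (k + 1) := by
  have hP : (0 : ℝ) < S.P (k + 1) := by exact_mod_cast S.P_pos (k + 1)
  have e : |t i - s i| * (S.P (k + 1) : ℝ) = |(t i - s i) * S.P (k + 1)| := by
    rw [abs_mul, abs_of_pos hP]
  rw [le_div_iff₀ hP, e]
  have t1 := Nat.floor_le (mul_nonneg hP.le ht)
  have t2 := Nat.lt_floor_add_one ((S.P (k + 1) : ℝ) * t i)
  have s1 := Nat.floor_le (mul_nonneg hP.le hs)
  have s2 := Nat.lt_floor_add_one ((S.P (k + 1) : ℝ) * s i)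
  have et := S.N_succ k t i
  have es := S.N_succ k s i
  rw [← h] at es
  change (S.N (k + 1) t i : ℝ) ≤ _ at t1
  change _ < (S.N (k + 1) t i : ℝ) + 1 at t2
  change (S.N (k + 1) s i : ℝ) ≤ _ at s1
  change _ < (S.N (k + 1) s i : ℝ) + 1 at s2
  rw [et] at t1 t2
  rw [es] at s1 s2
  push_cast at t1 t2 s1 s2
  rw [abs_le]
  constructor <;> cases abs_cases ((S.digit k t i : ℝ) - S.digit k s i) <;> nlinarith

theorem exists_first_diff {t s : Fin m → ℝ} (ht : ∀ i, 0 ≤ t i ∧ t i < 1)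
    (hs : ∀ i, 0 ≤ s i ∧ s i < 1) (hne : t ≠ s) :
    ∃ k, (∀ l ≤ k, S.N l t = S.N l s) ∧ ∃ i, S.digit k t i ≠ S.digit k s i := by
  classical
  have hex : ∃ k, S.N k t ≠ S.N k s := by
    by_contra! hcon
    apply hne
    funext i
    by_contra hi
    have hpos : 0 < |t i - s i| := abs_pos.mpr (sub_ne_zero.mpr hi)
    obtain ⟨k, hk⟩ := pow_unbounded_of_one_lt (1 / |t i - s i|) (one_lt_two)
    have h1 := S.abs_sub_le (k := k) (ht i).1 (hs i).1 (congrFun (hcon k) i)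
    have h2 : S.digit k t = S.digit k s := by
      funext i
      simp only [digit, hcon (k + 1)]
    rw [h2] at h1
    simp only [sub_self, abs_zero, zero_add] at h1
    have hP : (2 : ℝ) ^ k ≤ S.P (k + 1) := by
      have := (Nat.pow_le_pow_right (show 0 < 2 by norm_num) (Nat.le_succ k)).trans
        (S.P_ge (k + 1))
      exact_mod_cast this
    have h3 : 1 / (S.P (k + 1) : ℝ) ≤ 1 / 2 ^ k := one_div_le_one_div_of_le (by positivity) hP
    have h4 : 1 / (2 : ℝ) ^ k < |t i - s i| := by
      rw [div_lt_comm₀ (by positivity) hpos]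
      exact hk
    linarith
  have hspec := Nat.find_spec hex
  have hmin : ∀ l < Nat.find hex, S.N l t = S.N l s := fun l hl => by
    simpa using Nat.find_min hex hl
  rcases hn : Nat.find hex with _ | k
  · exfalso
    rw [hn] at hspec
    apply hspec
    funext i
    simp only [N, S.P_zero, Nat.cast_one, one_mul]
    rw [Nat.floor_eq_zero.mpr (ht i).2, Nat.floor_eq_zero.mpr (hs i).2]
  · rw [hn] at hspec hmin
    refine ⟨k, fun l hl => hmin l (by omega), ?_⟩
    by_contra! hcon
    apply hspec
    funext i
    rw [N_succ, N_succ, hcon i, hmin k (by omega)]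

/-- The numerical step of the Hölder estimate. Here `τ` is the size of the digit difference, `D` the
distance of the Cantor points, and `δ` the difference of a coordinate of the parameters. -/
theorem holder_arith {k : ℕ} {τ α D δ : ℝ} (hα0 : 0 ≤ α) (hα1 : α ≤ 1)
    (hMP : (S.M k : ℝ) ^ α ≤ S.P k) (hτ : 1 ≤ τ) (hτp : τ ≤ S.p k)
    (hD : τ / (2 * (S.M k * S.p k)) ≤ D) (hδ : δ ≤ (τ + 1) / S.P (k + 1)) :
    δ ≤ 4 * D ^ α := by
  have h1 : (0 : ℝ) < S.p k := by exact_mod_cast S.p_pos k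
  have h2 : (0 : ℝ) < S.M k := by exact_mod_cast S.M_pos k
  have h3 : (0 : ℝ) < S.P k := by exact_mod_cast S.P_pos k
  have hτ0 : 0 < τ := by linarith
  have hMα : 0 < (S.M k : ℝ) ^ α := Real.rpow_pos_of_pos h2 _
  have h2α : (2 : ℝ) ^ α ≤ 2 := by
    simpa using Real.rpow_le_rpow_of_exponent_le (x := 2) (by norm_num) hα1
  have h2α0 : (0 : ℝ) < (2 : ℝ) ^ α := by positivity
  have hr : τ / S.p k ≤ (τ / S.p k) ^ α := by
    simpa using Real.rpow_le_rpow_of_exponent_ge (x := τ / S.p k) (by positivity)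
      ((div_le_one h1).mpr hτp) hα1
  calc δ ≤ (τ + 1) / S.P (k + 1) := hδ
    _ ≤ (2 * τ) / S.P (k + 1) := by gcongr; linarith
    _ = 2 * (τ / S.p k) * (1 / S.P k) := by
        rw [S.P_succ]; push_cast; field_simp
    _ ≤ 2 * (τ / S.p k) ^ α * (1 / (S.M k : ℝ) ^ α) := by gcongr
    _ ≤ 2 * (τ / S.p k) ^ α * ((2 / (2 : ℝ) ^ α) / (S.M k : ℝ) ^ α) := by
        gcongr
        rw [le_div_iff₀ h2α0]; linarith
    _ = 4 * (τ / (2 * (S.M k * S.p k))) ^ α := by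
        rw [Real.div_rpow hτ0.le h1.le, Real.div_rpow hτ0.le (by positivity),
          Real.mul_rpow (by norm_num) (by positivity), Real.mul_rpow h2.le h1.le]
        field_simp
        norm_num
    _ ≤ 4 * D ^ α := by gcongr

/-- The inverse of `x` is Hölder with exponent `J / (2 J + 1)` on the unit cube. -/
theorem dist_le_holder {t s : Fin m → ℝ} (ht : ∀ i, 0 ≤ t i ∧ t i < 1)
    (hs : ∀ i, 0 ≤ s i ∧ s i < 1) :
    dist t s ≤ 4 * dist (S.x t) (S.x s) ^ ((J : ℝ) / (2 * J + 1)) := by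
  set α : ℝ := (J : ℝ) / (2 * J + 1) with hα
  have hα0 : 0 ≤ α := by positivity
  have hα1 : α ≤ 1 := by
    rw [hα, div_le_one (by positivity)]
    have : (0 : ℝ) ≤ J := by positivity
    linarith
  by_cases hne : t = s
  · subst hne
    rw [dist_self]
    positivity
  obtain ⟨k, hk, i₀, hi₀⟩ := S.exists_first_diff ht hs hne
  have h1 : (0 : ℝ) < S.p k := by exact_mod_cast S.p_pos k
  have h2 : (0 : ℝ) < S.M k := by exact_mod_cast S.M_pos k
  have hMP : (S.M k : ℝ) ^ α ≤ S.P k := by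
    have h := S.M_pow_le k
    have h' : (S.M k : ℝ) ^ (J : ℝ) ≤ (S.P k : ℝ) ^ ((2 * J + 1 : ℕ) : ℝ) := by
      rw [Real.rpow_natCast, Real.rpow_natCast]; exact_mod_cast h
    have hpos : (0 : ℝ) < ((2 * J + 1 : ℕ) : ℝ) := by positivity
    rw [← Real.rpow_inv_le_iff_of_pos (by positivity) (by positivity) hpos,
      ← Real.rpow_mul h2.le] at h'
    rw [hα]
    convert h' using 2
    push_cast
    rw [div_eq_mul_inv]
  rw [dist_pi_le_iff (by positivity)]
  intro i
  rw [Real.dist_eq]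
  have hδ := S.abs_sub_le (ht i).1 (hs i).1 (congrFun (hk k le_rfl) i)
  have hint : ∀ i, S.digit k t i ≠ S.digit k s i →
      (1 : ℝ) ≤ |(S.digit k t i : ℝ) - S.digit k s i| := by
    intro i hi
    have : (1 : ℤ) ≤ |(S.digit k t i : ℤ) - S.digit k s i| := by
      apply Int.one_le_abs; omega
    exact_mod_cast this
  -- If the digits of coordinate `i` agree, another coordinate `i₀` separates the Cantor points.
  by_cases hi : S.digit k t i = S.digit k s i
  · refine S.holder_arith hα0 hα1 hMP le_rfl (by exact_mod_cast S.p_pos k) ?_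
      (hδ.trans (by rw [hi, sub_self, abs_zero]; gcongr; norm_num))
    refine le_trans ?_ (S.abs_x_sub_ge hk i₀ hi₀)
    gcongr
    exact hint i₀ hi₀
  · refine S.holder_arith hα0 hα1 hMP (hint i hi) ?_ (S.abs_x_sub_ge hk i hi) hδ
    have a := S.digit_lt k t i
    have b := S.digit_lt k s i
    have : |(S.digit k t i : ℤ) - S.digit k s i| ≤ S.p k := by
      rw [abs_le]; constructor <;> omega
    exact_mod_cast this

end Scheme

/-! ### Hausdorff dimension under maps with Hölder inverse -/

theorem dimH_le_of_dist_le {α : NNReal} (hα : 0 < α) (C : NNReal) {X Y : Type*} [MetricSpace X]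
    [MetricSpace Y] [Nonempty X] (f : X → Y) (s : Set X)
    (h : ∀ a ∈ s, ∀ b ∈ s, dist a b ≤ C * dist (f a) (f b) ^ (α : ℝ)) :
    dimH s ≤ dimH (f '' s) / α := by
  have hinj : Set.InjOn f s := by
    intro a ha b hb hab
    have h1 := h a ha b hb
    rw [hab, dist_self, Real.zero_rpow (by exact_mod_cast hα.ne'), mul_zero] at h1
    exact dist_le_zero.mp h1
  have himg : Function.invFunOn f s '' (f '' s) = s := by
    ext a
    constructor
    · rintro ⟨_, ⟨b, hb, rfl⟩, rfl⟩
      rwa [hinj.leftInvOn_invFunOn hb]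
    · intro ha
      exact ⟨f a, ⟨a, ha, rfl⟩, hinj.leftInvOn_invFunOn ha⟩
  have hol : HolderOnWith C α (Function.invFunOn f s) (f '' s) := by
    rintro _ ⟨a, ha, rfl⟩ _ ⟨b, hb, rfl⟩
    rw [hinj.leftInvOn_invFunOn ha, hinj.leftInvOn_invFunOn hb, edist_nndist, edist_nndist,
      ← ENNReal.coe_rpow_of_nonneg _ α.coe_nonneg, ← ENNReal.coe_mul, ENNReal.coe_le_coe,
      ← NNReal.coe_le_coe]
    push_cast
    exact h a ha b hb
  calc dimH s = dimH (Function.invFunOn f s '' (f '' s)) := by rw [himg]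
    _ ≤ _ := hol.dimH_image_le hα

/-! ### Dot products on the paraboloid -/

/-- The dot product of the points `(u, |u|²)` and `(v, |v|²)` of the paraboloid. -/
def pdot {n : ℕ} (u v : Fin n → ℝ) : ℝ :=
  ∑ j, u j * v j + (∑ j, u j ^ 2) * ∑ j, v j ^ 2

theorem abs_sum_mul_sub_le {n : ℕ} {u v u' v' : Fin n → ℝ} {δ : ℝ}
    (hu : ∀ j, 0 ≤ u j ∧ u j ≤ 1) (hv' : ∀ j, 0 ≤ v' j ∧ v' j ≤ 1)
    (huu : ∀ j, |u j - u' j| ≤ δ) (hvv : ∀ j, |v j - v' j| ≤ δ) :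
    |∑ j, u j * v j - ∑ j, u' j * v' j| ≤ n * (2 * δ) := by
  rw [← Finset.sum_sub_distrib]
  refine (Finset.abs_sum_le_sum_abs _ _).trans ?_
  have : ∀ j ∈ Finset.univ, |u j * v j - u' j * v' j| ≤ 2 * δ := by
    intro j _
    have e : u j * v j - u' j * v' j = u j * (v j - v' j) + v' j * (u j - u' j) := by ring
    have h0 := huu j
    have h1 := hvv j
    rw [e]
    refine (abs_add_le _ _).trans ?_
    rw [abs_mul, abs_mul, abs_of_nonneg (hu j).1, abs_of_nonneg (hv' j).1]
    nlinarith [abs_nonneg (u j - u' j), abs_nonneg (v j - v' j), (hu j).2, (hv' j).2]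
  simpa using Finset.sum_le_card_nsmul _ _ _ this

theorem sum_sq_mem {n : ℕ} {u : Fin n → ℝ} (hu : ∀ j, 0 ≤ u j ∧ u j ≤ 1) :
    0 ≤ ∑ j, u j ^ 2 ∧ ∑ j, u j ^ 2 ≤ n := by
  refine ⟨Finset.sum_nonneg fun j _ => sq_nonneg _, ?_⟩
  have : ∀ j ∈ Finset.univ, u j ^ 2 ≤ 1 := fun j _ => pow_le_one₀ (hu j).1 (hu j).2
  simpa using Finset.sum_le_card_nsmul _ _ _ this

theorem pdot_le {n : ℕ} {u v : Fin n → ℝ}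
    (hu : ∀ j, 0 ≤ u j ∧ u j ≤ 1) (hv : ∀ j, 0 ≤ v j ∧ v j ≤ 1) :
    pdot u v ≤ n + n ^ 2 := by
  have h1 : ∑ j, u j * v j ≤ n := by
    have : ∀ j ∈ Finset.univ, u j * v j ≤ 1 := fun j _ =>
      mul_le_one₀ (hu j).2 (hv j).1 (hv j).2
    simpa using Finset.sum_le_card_nsmul _ _ _ this
  have h2 := sum_sq_mem hu
  have h3 := sum_sq_mem hv
  unfold pdot
  nlinarith [mul_le_mul h2.2 h3.2 h3.1 (by positivity)]

theorem abs_pdot_sub_le {n : ℕ} {u v u' v' : Fin n → ℝ} {δ : ℝ}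
    (hu : ∀ j, 0 ≤ u j ∧ u j ≤ 1) (hv : ∀ j, 0 ≤ v j ∧ v j ≤ 1)
    (hu' : ∀ j, 0 ≤ u' j ∧ u' j ≤ 1) (hv' : ∀ j, 0 ≤ v' j ∧ v' j ≤ 1)
    (huu : ∀ j, |u j - u' j| ≤ δ) (hvv : ∀ j, |v j - v' j| ≤ δ) :
    |pdot u v - pdot u' v'| ≤ (2 * n + 4 * n ^ 2) * δ := by
  have h1 := abs_sum_mul_sub_le hu hv' huu hvv
  have h2 := abs_sum_mul_sub_le hu hu' huu huu
  have h3 := abs_sum_mul_sub_le hv hv' hvv hvv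
  simp only [← pow_two] at h2 h3
  have b1 := sum_sq_mem hu
  have b2 := sum_sq_mem hv'
  have e : pdot u v - pdot u' v' = (∑ j, u j * v j - ∑ j, u' j * v' j) +
      ((∑ j, u j ^ 2) * (∑ j, v j ^ 2 - ∑ j, v' j ^ 2) +
        (∑ j, v' j ^ 2) * (∑ j, u j ^ 2 - ∑ j, u' j ^ 2)) := by
    unfold pdot; ring
  rw [e]
  refine (abs_add_le _ _).trans ?_
  have h4 := abs_add_le ((∑ j, u j ^ 2) * (∑ j, v j ^ 2 - ∑ j, v' j ^ 2))
    ((∑ j, v' j ^ 2) * (∑ j, u j ^ 2 - ∑ j, u' j ^ 2))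
  rw [abs_mul, abs_mul, abs_of_nonneg b1.1, abs_of_nonneg b2.1] at h4
  have h5 := mul_le_mul b1.2 h3 (abs_nonneg _) (by positivity)
  have h6 := mul_le_mul b2.2 h2 (abs_nonneg _) (by positivity)
  linarith

namespace Scheme

variable {m J : ℕ} (S : Scheme m J)

/-! ### The Cantor set and its dot products -/

/-- The squared norm of a corner has only one factor `p k` in its denominator; this is where the
divisibility `A_dvd` enters. -/
theorem norm_sq_X (k : ℕ) (t : Fin m → ℝ) :
    ∃ w : ℕ, ∑ j, S.X (k + 1) t j ^ 2 = w / ((S.M k : ℝ) ^ 2 * S.p k) := by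
  obtain ⟨q, hq⟩ := S.A_dvd k (S.digit k t)
  have h1 : (S.p k : ℝ) ≠ 0 := by exact_mod_cast (S.p_pos k).ne'
  have h2 : (S.M k : ℝ) ≠ 0 := by exact_mod_cast (S.M_pos k).ne'
  refine ⟨S.p k * ∑ j, S.V t k j ^ 2 + 2 * ∑ j, S.V t k j * S.A k (S.digit k t) j + q, ?_⟩
  have hq' : ∑ j, (S.A k (S.digit k t) j : ℝ) ^ 2 = S.p k * q := by exact_mod_cast hq
  simp only [X_succ', div_pow, ← Finset.sum_div]
  have e : ∑ j, ((S.V t k j * S.p k + S.A k (S.digit k t) j : ℕ) : ℝ) ^ 2 =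
      S.p k * (S.p k * ∑ j, (S.V t k j : ℝ) ^ 2 +
        2 * ∑ j, (S.V t k j : ℝ) * S.A k (S.digit k t) j + q) := by
    rw [mul_add _ _ (q : ℝ), ← hq', mul_add, Finset.mul_sum, Finset.mul_sum, Finset.mul_sum,
      Finset.mul_sum, ← Finset.sum_add_distrib, ← Finset.sum_add_distrib]
    refine Finset.sum_congr rfl fun j _ => ?_
    push_cast
    ring
  rw [e]
  push_cast
  field_simp

theorem pdot_X (k : ℕ) (t s : Fin m → ℝ) :
    ∃ z : ℕ, pdot (S.X (k + 1) t) (S.X (k + 1) s) = z / ((S.M k : ℝ) ^ 4 * S.p k ^ 2) := by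
  obtain ⟨w, hw⟩ := S.norm_sq_X k t
  obtain ⟨w', hw'⟩ := S.norm_sq_X k s
  have h1 : (S.p k : ℝ) ≠ 0 := by exact_mod_cast (S.p_pos k).ne'
  have h2 : (S.M k : ℝ) ≠ 0 := by exact_mod_cast (S.M_pos k).ne'
  refine ⟨S.M k ^ 2 * ∑ j, (S.V t k j * S.p k + S.A k (S.digit k t) j) *
    (S.V s k j * S.p k + S.A k (S.digit k s) j) + w * w', ?_⟩
  rw [pdot, hw, hw']
  simp only [X_succ', div_mul_div_comm, ← Finset.sum_div, ← Nat.cast_mul, ← Nat.cast_sum]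
  generalize ∑ j, (S.V t k j * S.p k + S.A k (S.digit k t) j) *
    (S.V s k j * S.p k + S.A k (S.digit k s) j) = Z
  push_cast
  field_simp

theorem X_mem (k : ℕ) (t : Fin m → ℝ) (j : Fin (m + 2)) : 0 ≤ S.X k t j ∧ S.X k t j ≤ 1 :=
  ⟨by rw [X]; positivity, (S.X_le_x k t j).trans (S.x_mem t j).2⟩

/-- The Cantor set: the closure of the Cantor points with parameter in the open unit cube of `ℝ^m`,
which is the sup-norm ball of radius `1 / 2` about its centre. -/
def cantor : Set (Fin (m + 2) → ℝ) := closure (S.x '' Metric.ball (fun _ => 1 / 2) (1 / 2))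

theorem cantor_subset : S.cantor ⊆ Set.Icc 0 1 := by
  refine closure_minimal ?_ isClosed_Icc
  rintro _ ⟨t, -, rfl⟩
  exact ⟨fun j => (S.x_mem t j).1, fun j => (S.x_mem t j).2⟩

theorem isCompact_cantor : IsCompact S.cantor :=
  isCompact_Icc.of_isClosed_subset isClosed_closure S.cantor_subset

theorem exists_near {u : Fin (m + 2) → ℝ} (hu : u ∈ S.cantor) (k : ℕ) :
    ∃ t, ∀ j, |u j - S.X k t j| ≤ 2 / S.M k := by
  have hM : (0 : ℝ) < S.M k := by exact_mod_cast S.M_pos k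
  obtain ⟨_, ⟨t, -, rfl⟩, ht⟩ := Metric.mem_closure_iff.mp hu (1 / S.M k) (by positivity)
  refine ⟨t, fun j => ?_⟩
  have h1 := (dist_le_pi_dist u (S.x t) j).trans ht.le
  rw [Real.dist_eq, abs_le] at h1
  have h2 := S.X_le_x k t j
  have h3 := S.x_le k t j
  have e : (2 : ℝ) / S.M k = 1 / S.M k + 1 / S.M k := by ring
  rw [abs_le, e]
  constructor <;> linarith

theorem le_dimH_cantor (hJ : 0 < J) :
    (m : ℝ≥0∞) * ENNReal.ofReal ((J : ℝ) / (2 * J + 1)) ≤ dimH S.cantor := by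
  have hα : 0 < (J : ℝ) / (2 * J + 1) := by positivity
  have hmem : ∀ t ∈ Metric.ball (fun _ : Fin m => (1 / 2 : ℝ)) (1 / 2),
      ∀ i, 0 ≤ t i ∧ t i < 1 := by
    intro t ht i
    have h := (dist_le_pi_dist t (fun _ : Fin m => (1 / 2 : ℝ)) i).trans_lt ht
    rw [Real.dist_eq, abs_lt] at h
    constructor <;> linarith
  have key := dimH_le_of_dist_le (α := Real.toNNReal ((J : ℝ) / (2 * J + 1)))
    (Real.toNNReal_pos.mpr hα) 4 S.x (Metric.ball (fun _ : Fin m => (1 / 2 : ℝ)) (1 / 2))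
    (fun a ha b hb => by
      rw [Real.coe_toNNReal _ hα.le]
      exact S.dist_le_holder (hmem a ha) (hmem b hb))
  rw [Real.dimH_ball_pi_fin _ (by norm_num)] at key
  exact (ENNReal.mul_le_of_le_div key).trans (dimH_mono subset_closure)

/-- At level `k + 1` the dot products lie within `12 (m+2)² / M (k + 1)` of one of at most
`2 (m+2)² L + 1` multiples of `1 / L`, where `L = M k ^ 4 * p k ^ 2`, and
`M (k + 1) = L * (k + 2)`. -/
theorem volume_pdot_le (k : ℕ) :
    volume {r | ∃ u ∈ S.cantor, ∃ v ∈ S.cantor, pdot u v = r} ≤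
      ENNReal.ofReal (72 * ((m : ℝ) + 2) ^ 4 / (k + 2)) := by
  have hp : (1 : ℝ) ≤ S.p k := by exact_mod_cast S.p_pos k
  have hM : (1 : ℝ) ≤ S.M k := by exact_mod_cast S.M_pos k
  have hM' : (0 : ℝ) < S.M (k + 1) := by exact_mod_cast S.M_pos (k + 1)
  set L : ℕ := S.M k ^ 4 * S.p k ^ 2 with hL
  have hLc : (L : ℝ) = (S.M k : ℝ) ^ 4 * S.p k ^ 2 := by rw [hL]; push_cast; rfl
  have hL0 : (0 : ℝ) < L := by rw [hLc]; positivity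
  set R : ℝ := 12 * ((m : ℝ) + 2) ^ 2 / S.M (k + 1) with hR
  have hn : (2 : ℝ) ≤ (m : ℝ) + 2 := by linarith [(Nat.cast_nonneg m : (0 : ℝ) ≤ m)]
  have hsub : {r | ∃ u ∈ S.cantor, ∃ v ∈ S.cantor, pdot u v = r} ⊆
      ⋃ z ∈ Finset.range (2 * (m + 2) ^ 2 * L + 1), Metric.closedBall ((z : ℝ) / L) R := by
    rintro _ ⟨u, hu, v, hv, rfl⟩
    obtain ⟨t, ht⟩ := S.exists_near hu (k + 1)
    obtain ⟨s, hs⟩ := S.exists_near hv (k + 1)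
    obtain ⟨z, hz⟩ := S.pdot_X k t s
    rw [← hLc] at hz
    have h1 := abs_pdot_sub_le (fun j => ⟨(S.cantor_subset hu).1 j, (S.cantor_subset hu).2 j⟩)
      (fun j => ⟨(S.cantor_subset hv).1 j, (S.cantor_subset hv).2 j⟩)
      (S.X_mem (k + 1) t) (S.X_mem (k + 1) s) ht hs
    have h2 := pdot_le (S.X_mem (k + 1) t) (S.X_mem (k + 1) s)
    rw [hz] at h1 h2
    push_cast at h1 h2
    rw [Set.mem_iUnion₂]
    refine ⟨z, ?_, ?_⟩
    · rw [Finset.mem_range, Nat.lt_succ_iff]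
      rw [div_le_iff₀ hL0] at h2
      have : (z : ℝ) ≤ 2 * (m + 2) ^ 2 * L := h2.trans (by gcongr; nlinarith)
      exact_mod_cast this
    · rw [Metric.mem_closedBall, Real.dist_eq]
      refine h1.trans ?_
      rw [hR, mul_div_assoc', div_le_div_iff_of_pos_right hM']
      nlinarith
  refine (measure_mono hsub).trans ((measure_biUnion_finset_le _ _).trans ?_)
  simp only [Real.volume_closedBall, Finset.sum_const, Finset.card_range, nsmul_eq_mul]
  rw [← ENNReal.ofReal_natCast, ← ENNReal.ofReal_mul (by positivity)]
  apply ENNReal.ofReal_le_ofReal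
  have hc : (S.M (k + 1) : ℝ) = L * (k + 2) := by
    rw [S.M_succ, S.c_eq, hLc]
    push_cast
    ring
  have hL1 : (1 : ℝ) ≤ L := by
    rw [hLc]
    exact one_le_mul_of_one_le_of_one_le (one_le_pow₀ hM) (one_le_pow₀ hp)
  calc ((2 * (m + 2) ^ 2 * L + 1 : ℕ) : ℝ) * (2 * R)
      ≤ (3 * ((m : ℝ) + 2) ^ 2 * L) * (2 * R) := by
        gcongr
        push_cast
        nlinarith [one_le_mul_of_one_le_of_one_le
          (one_le_pow₀ (n := 2) (show (1 : ℝ) ≤ (m : ℝ) + 2 by linarith)) hL1]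
    _ = 72 * ((m : ℝ) + 2) ^ 4 / (k + 2) := by
        rw [hR, hc]
        field_simp
        ring

theorem volume_pdot :
    volume {r | ∃ u ∈ S.cantor, ∃ v ∈ S.cantor, pdot u v = r} = 0 := by
  have h0 : Filter.Tendsto (fun k : ℕ => ENNReal.ofReal (72 * ((m : ℝ) + 2) ^ 4 / (k + 2)))
      Filter.atTop (nhds 0) := by
    rw [← ENNReal.ofReal_zero]
    refine ENNReal.tendsto_ofReal ?_
    exact Filter.Tendsto.div_atTop tendsto_const_nhds
      (Filter.tendsto_atTop_add_const_right _ _ tendsto_natCast_atTop_atTop)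
  exact le_antisymm (ge_of_tendsto' h0 S.volume_pdot_le) zero_le

end Scheme

/-! ### Lifting to the paraboloid -/

/-- The point `(u, |u|²)` of the paraboloid in `ℝ^(m+3)`. -/
noncomputable def paraboloidLift {m : ℕ} (u : Fin (m + 2) → ℝ) : EuclideanSpace ℝ (Fin (m + 3)) :=
  WithLp.toLp 2 (Fin.snoc (α := fun _ => ℝ) u (∑ j, u j ^ 2))

theorem continuous_paraboloidLift {m : ℕ} : Continuous (paraboloidLift (m := m)) := by
  refine (PiLp.continuous_toLp 2 _).comp (continuous_pi fun i => ?_)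
  refine Fin.lastCases ?_ (fun j => ?_) i
  · simp only [Fin.snoc_last]
    fun_prop
  · simp only [Fin.snoc_castSucc]
    fun_prop

theorem paraboloidLift_mem {m : ℕ} (u : Fin (m + 2) → ℝ) :
    paraboloidLift u ∈ stdParaboloid (m + 3) := by
  refine ⟨WithLp.toLp 2 u, ?_⟩
  funext i
  refine Fin.lastCases ?_ (fun j => ?_) i
  · simp [paraboloidLift, EuclideanSpace.norm_sq_eq]
  · simp [paraboloidLift]

theorem inner_paraboloidLift {m : ℕ} (u v : Fin (m + 2) → ℝ) :
    ⟪paraboloidLift u, paraboloidLift v⟫ = pdot u v := by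
  rw [PiLp.inner_apply, Fin.sum_univ_castSucc]
  simp [paraboloidLift, pdot, mul_comm]

theorem dimH_le_paraboloidLift {m : ℕ} (s : Set (Fin (m + 2) → ℝ)) :
    dimH s ≤ dimH (paraboloidLift '' s) := by
  have hL : LipschitzWith 1
      (fun (y : EuclideanSpace ℝ (Fin (m + 3))) (j : Fin (m + 2)) => y j.castSucc) := by
    refine LipschitzWith.of_dist_le_mul fun a b => ?_
    rw [NNReal.coe_one, one_mul, dist_pi_le_iff dist_nonneg]
    intro j
    simpa [Real.dist_eq, dist_eq_norm] using PiLp.norm_apply_le (a - b) j.castSucc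
  have e : (fun (y : EuclideanSpace ℝ (Fin (m + 3))) (j : Fin (m + 2)) => y j.castSucc) ''
      (paraboloidLift '' s) = s := by
    rw [Set.image_image]
    simp [paraboloidLift]
  calc dimH s = _ := by rw [e]
    _ ≤ _ := hL.dimH_image_le _

/-- For `d ≥ 5` and every sufficiently small `ε > 0` there is a compact subset `F` of
the standard paraboloid `P_d` with Hausdorff dimension at least `(d-3)/2 - ε` whose dot
product set has Lebesgue measure zero. -/
theorem paraboloid_counterexample_half
    (d : ℕ) (hd : 5 ≤ d) :
    ∃ ε₀ : ℝ, 0 < ε₀ ∧ ∀ ε : ℝ, 0 < ε → ε < ε₀ →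
      ∃ F : Set (EuclideanSpace ℝ (Fin d)), F ⊆ stdParaboloid d ∧ IsCompact F ∧
        ENNReal.ofReal (((d : ℝ) - 3) / 2 - ε) ≤ dimH F ∧ volume (dotSet F) = 0 := by
  obtain ⟨m, rfl⟩ : ∃ m, d = m + 3 := ⟨d - 3, by omega⟩
  refine ⟨1, one_pos, fun ε hε _ => ?_⟩
  obtain ⟨J, hJ⟩ := exists_nat_gt ((m : ℝ) / ε)
  have hJ0 : (0 : ℝ) < J := lt_of_le_of_lt (by positivity) hJ
  obtain ⟨S⟩ := exists_scheme m J
  refine ⟨paraboloidLift '' S.cantor, ?_, S.isCompact_cantor.image continuous_paraboloidLift, ?_, ?_⟩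
  · rintro _ ⟨u, -, rfl⟩
    exact paraboloidLift_mem u
  · refine le_trans ?_ ((S.le_dimH_cantor (by exact_mod_cast hJ0)).trans (dimH_le_paraboloidLift _))
    rw [← ENNReal.ofReal_natCast, ← ENNReal.ofReal_mul (by positivity)]
    apply ENNReal.ofReal_le_ofReal
    rw [div_lt_iff₀ hε] at hJ
    -- The loss in dimension is `m / (2 (2 J + 1))`, below `ε` because `J > m / ε`.
    have e : (m : ℝ) * (J / (2 * J + 1)) = m / 2 - m / (2 * (2 * J + 1)) := by
      field_simp
      ring
    have h : (m : ℝ) / (2 * (2 * J + 1)) ≤ ε := by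
      rw [div_le_iff₀ (by positivity)]
      nlinarith [mul_pos hJ0 hε]
    rw [e]
    push_cast
    linarith
  · have e : dotSet (paraboloidLift '' S.cantor) =
        {r | ∃ u ∈ S.cantor, ∃ v ∈ S.cantor, pdot u v = r} := by
      ext r
      simp [dotSet, inner_paraboloidLift]
    rw [e]
    exact S.volume_pdot
end

section
/- Let d ≥ 4. For every sufficiently small ε > 0 there exists a set J ⊆ ℝ^d of positive d-dimensional Lebesgue measure such that for every a ∈ J there exists a compact subset F_a of the translated paraboloid a + P_d with Hausdorff dimension at least (d−2)/2 − ε whose dot product set Π(F_a) has one-dimensional Lebesgue measure zero. -/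
/-!
Write `d = m + 1`. Over `u ∈ ℝ^m` the paraboloid translated by `a` has the point
`(u, h_a(u))`, where `h_a(u) = a_last + ∑ (u_i - a_i)²`. The compact set is the lift of a Cantor
set `K ⊆ [0, 1]^m` (`trapSet`) such that, for an increasing sequence of scales `A k < B (k+1)`, all
coordinates of every lifted point, the height included, lie within `O(2^(-B (k+1)))` of the
lattice `2^(-A k) ℤ`. Dot products of such points lie within `O(2^(-B (k+1)))` of
`4^(-A k) ℤ`, and since `B (k+1) ≥ 2 A k + k` the dot product set is covered by
`O(4^(A k))` intervals of total length `O(2^(-k))`, so it is null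
(`volume_eq_zero_of_near_lattice`).

For the first `m` coordinates it suffices that `u` is close to `n / 2^(A k)` for a lattice point
`n`; the height is then controlled if `n` is admissible, meaning that the fractional part of
`phase (2^(A k)) n a = 2^(A k) h_a(n / 2^(A k))` is below `p = 2^(-(B (k+1) - A k))`. For `a`
uniform in the unit cube these fractional parts are uniform and pairwise independent: for
`n ≠ n'` the difference of the two phases is a nonconstant affine function, with integer slopes,
of the coordinates `a_i`, while `a_last` enters both phases with slope `2^(A k)`
(`lintegral_phase`, `lintegral_phase_mul`). Chebyshev's inequality shows that, outside a set of `a`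
of measure at most `2^(-(k+2))`, each stage-`k` cell (a dyadic cube of side `2^(-(B k + T k))`)
contains at least half of the expected number of admissible points (`cubeMeasure_badSet_le`). The
remaining `a` have positive measure (`volume_translates_pos`).

For such `a`, binary digits of a point `y ∈ [0, 1)^m` are used to select, at each stage, a cell
and an admissible lattice point in it. This codes `y` by a point `codedPt y ∈ K`, and the inverse
of this coding is Hölder of exponent `θ` (`dist_le_dist_codedPt`), so `dim_H K ≥ m θ`
(`Rich.le_dimH_trapSet`). The scales are chosen in `exists_scales` so that
`m θ = (m - 1) / 2 - m / R` with `R` arbitrarily large. Projecting the lift back to `ℝ^m` does not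
increase dimension, so the lift has dimension at least `(d - 2) / 2 - ε`.
-/

open MeasureTheory
open scoped RealInnerProductSpace ENNReal

/-! ### Equidistribution and pairwise independence of the phases -/

/-- Averaging over a full period is unchanged by an affine substitution with nonzero integer
slope, since `x ↦ k x + c` preserves Haar measure on the circle. -/
lemma lintegral_periodic_comp_affine {g : ℝ → ℝ≥0∞} (hg : Measurable g)
    (hper : Function.Periodic g 1) {k : ℤ} (hk : k ≠ 0) (c : ℝ) :
    ∫⁻ x in Set.Ioc (0 : ℝ) 1, g (k * x + c) = ∫⁻ x in Set.Ioc (0 : ℝ) 1, g x := by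
  set G : UnitAddCircle → ℝ≥0∞ := hper.lift with hG
  have hGc : ∀ x : ℝ, G (x : UnitAddCircle) = g x := fun x => hper.lift_coe x
  have hGm : Measurable G := by
    have : G = fun y => g ((AddCircle.measurableEquivIoc (1 : ℝ) 0 y : Set.Ioc (0 : ℝ) (0 + 1)) : ℝ) := by
      funext y
      rw [← hGc]
      congr 1
      exact AddCircle.coe_equivIoc.symm
    rw [this]
    exact hg.comp (measurable_subtype_coe.comp (AddCircle.measurableEquivIoc (1 : ℝ) 0).measurable)
  have h1 := UnitAddCircle.lintegral_preimage 0 G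
  have h2 := UnitAddCircle.lintegral_preimage 0 (fun y => G (k • y + (c : UnitAddCircle)))
  have hmp : MeasurePreserving (fun y : UnitAddCircle => k • y + (c : UnitAddCircle)) := by
    have ha : MeasurePreserving (fun y : UnitAddCircle => k • y) :=
      Measure.measurePreserving_zsmul volume hk
    exact (measurePreserving_add_right volume (c : UnitAddCircle)).comp ha
  rw [hmp.lintegral_comp hGm, ← h1] at h2
  simp only [zero_add, hGc] at h2
  rw [← h2]
  refine lintegral_congr fun x => ?_
  rw [← hGc]
  congr 1
  rw [← zsmul_eq_mul]
  simp

/-- Indicator of the event that the fractional part of `x` is below `p`. -/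
noncomputable def fracInd (p x : ℝ) : ℝ≥0∞ := if Int.fract x < p then 1 else 0

lemma measurable_fracInd (p : ℝ) : Measurable (fracInd p) := by
  unfold fracInd
  exact Measurable.ite (measurable_fract measurableSet_Iio) measurable_const measurable_const

lemma periodic_fracInd (p : ℝ) : Function.Periodic (fracInd p) 1 := fun x => by
  simp [fracInd]

lemma lintegral_fracInd {p : ℝ} (hp1 : p ≤ 1) :
    ∫⁻ x in Set.Ioc (0 : ℝ) 1, fracInd p x = ENNReal.ofReal p := by
  rw [← restrict_Ico_eq_restrict_Ioc]
  have : ∫⁻ x in Set.Ico (0 : ℝ) 1, fracInd p x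
      = ∫⁻ x in Set.Ico (0 : ℝ) 1, (Set.Iio p).indicator 1 x := by
    refine setLIntegral_congr_fun measurableSet_Ico fun x hx => ?_
    simp [fracInd, Int.fract_eq_self.2 hx, Set.indicator]
  rw [this, lintegral_indicator_one measurableSet_Iio, Measure.restrict_apply measurableSet_Iio]
  have : Set.Iio p ∩ Set.Ico 0 1 = Set.Ico 0 p := by
    ext x
    simp only [Set.mem_inter_iff, Set.mem_Iio, Set.mem_Ico]
    constructor
    · rintro ⟨h1, h2, h3⟩; exact ⟨h2, h1⟩
    · rintro ⟨h1, h2⟩; exact ⟨h2, h1, by linarith⟩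
  rw [this]; simp

lemma lintegral_fracInd_affine {p : ℝ} (hp1 : p ≤ 1) {k : ℤ} (hk : k ≠ 0) (c : ℝ) :
    ∫⁻ x in Set.Ioc (0 : ℝ) 1, fracInd p (k * x + c) = ENNReal.ofReal p := by
  rw [lintegral_periodic_comp_affine (measurable_fracInd p) (periodic_fracInd p) hk,
    lintegral_fracInd hp1]

/-- Autocorrelation of `fracInd p` over one period. -/
noncomputable def fracCorr (p z : ℝ) : ℝ≥0∞ :=
  ∫⁻ w in Set.Ioc (0 : ℝ) 1, fracInd p w * fracInd p (w + z)

lemma measurable_fracCorr (p : ℝ) : Measurable (fracCorr p) := by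
  unfold fracCorr
  apply Measurable.lintegral_prod_right
  exact ((measurable_fracInd p).comp measurable_snd).mul
    ((measurable_fracInd p).comp (measurable_snd.add measurable_fst))

lemma periodic_fracCorr (p : ℝ) : Function.Periodic (fracCorr p) 1 := fun z => by
  unfold fracCorr
  refine lintegral_congr fun w => ?_
  rw [← add_assoc, periodic_fracInd p (w + z)]

lemma lintegral_fracCorr {p : ℝ} (hp1 : p ≤ 1) :
    ∫⁻ z in Set.Ioc (0 : ℝ) 1, fracCorr p z = ENNReal.ofReal p * ENNReal.ofReal p := by
  unfold fracCorr
  rw [lintegral_lintegral_swap]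
  · have : ∀ w : ℝ, ∫⁻ z in Set.Ioc (0 : ℝ) 1, fracInd p w * fracInd p (w + z)
        = fracInd p w * ENNReal.ofReal p := fun w => by
      have hm : Measurable fun z => fracInd p (w + z) :=
        (measurable_fracInd p).comp (measurable_const_add w)
      rw [lintegral_const_mul _ hm]
      congr 1
      have := lintegral_fracInd_affine hp1 one_ne_zero w
      simpa [add_comm] using this
    simp_rw [this]
    rw [lintegral_mul_const _ (measurable_fracInd p), lintegral_fracInd hp1]
  · exact (((measurable_fracInd p).comp measurable_snd).mul
      ((measurable_fracInd p).comp (measurable_snd.add measurable_fst))).aemeasurable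

lemma lintegral_fracInd_mul {p : ℝ} {k : ℤ} (hk : k ≠ 0) (c c' : ℝ) :
    ∫⁻ x in Set.Ioc (0 : ℝ) 1, fracInd p (k * x + c) * fracInd p (k * x + c')
      = fracCorr p (c' - c) := by
  have := lintegral_periodic_comp_affine (g := fun w => fracInd p w * fracInd p (w + (c' - c)))
    ((measurable_fracInd p).mul ((measurable_fracInd p).comp (measurable_add_const _)))
    (fun x => by
      have h := periodic_fracInd p (x + (c' - c))
      simp only [periodic_fracInd p x]
      rw [add_right_comm, h]) hk c
  simp only [fracCorr]
  rw [← this]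
  refine lintegral_congr fun x => ?_
  congr 2
  ring

/-- Lebesgue measure on the unit cube `(0,1]^ι`. -/
noncomputable def cubeMeasure (ι : Type*) [Fintype ι] : Measure (ι → ℝ) :=
  Measure.pi fun _ => volume.restrict (Set.Ioc (0 : ℝ) 1)

instance unitIoc_isProbabilityMeasure :
    IsProbabilityMeasure (volume.restrict (Set.Ioc (0 : ℝ) 1)) := ⟨by simp⟩

instance cubeMeasure_isProbabilityMeasure (ι : Type*) [Fintype ι] :
    IsProbabilityMeasure (cubeMeasure ι) := by
  unfold cubeMeasure; infer_instance

lemma cubeMeasure_le_volume (ι : Type*) [Fintype ι] : cubeMeasure ι ≤ volume := by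
  unfold cubeMeasure
  rw [← Measure.restrict_pi_pi]
  exact Measure.restrict_le_self

/-- Tonelli's theorem in the form: resampling one coordinate does not change the integral. -/
lemma lintegral_cube_update {ι : Type*} [Fintype ι] [DecidableEq ι] {f : (ι → ℝ) → ℝ≥0∞}
    (hf : Measurable f) (j : ι) :
    ∫⁻ x, f x ∂cubeMeasure ι
      = ∫⁻ x, (∫⁻ t in Set.Ioc (0 : ℝ) 1, f (Function.update x j t)) ∂cubeMeasure ι := by
  unfold cubeMeasure
  have hf' : Measurable fun x => ∫⁻ t in Set.Ioc (0 : ℝ) 1, f (Function.update x j t) := by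
    apply Measurable.lintegral_prod_right
    exact hf.comp (measurable_update'.comp measurable_id)
  refine lintegral_eq_of_lmarginal_eq {j} hf hf' ?_
  rw [lmarginal_singleton, lmarginal_singleton]
  funext x
  simp

/-- `q` times the height over `n / q` of the paraboloid translated by `a`. -/
noncomputable def phase {m : ℕ} (q : ℕ) (n : Fin m → ℕ) (a : Fin (m + 1) → ℝ) : ℝ :=
  q * (a (Fin.last m) + ∑ i : Fin m, ((n i : ℝ) / q - a i.castSucc) ^ 2)

lemma measurable_phase {m : ℕ} (q : ℕ) (n : Fin m → ℕ) : Measurable (phase q n) := by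
  unfold phase; fun_prop

lemma lintegral_phase {m : ℕ} {q : ℕ} (hq : 0 < q) (n : Fin m → ℕ) {p : ℝ} (hp1 : p ≤ 1) :
    ∫⁻ a, fracInd p (phase q n a) ∂cubeMeasure (Fin (m + 1)) = ENNReal.ofReal p := by
  have hm : Measurable fun a => fracInd p (phase q n a) :=
    (measurable_fracInd p).comp (measurable_phase q n)
  rw [lintegral_cube_update hm (Fin.last m)]
  have : ∀ x : Fin (m + 1) → ℝ, ∫⁻ t in Set.Ioc (0 : ℝ) 1,
      fracInd p (phase q n (Function.update x (Fin.last m) t)) = ENNReal.ofReal p := fun x => by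
    rw [← lintegral_fracInd_affine hp1 (k := q) (by exact_mod_cast hq.ne')
      (q * ∑ i : Fin m, ((n i : ℝ) / q - x i.castSucc) ^ 2)]
    refine lintegral_congr fun t => ?_
    simp [phase, mul_add, (Fin.castSucc_lt_last _).ne]
  simp [this]

/-- Pairwise independence of the phases: averaging over the last coordinate of `a` leaves the
autocorrelation of `fracInd p` at the difference of the phases, and averaging over a coordinate `j`
with `n j ≠ n' j` makes that difference uniform modulo one. -/
lemma lintegral_phase_mul {m : ℕ} {q : ℕ} (hq : 0 < q) {n n' : Fin m → ℕ} (hn : n ≠ n') {p : ℝ}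
    (hp1 : p ≤ 1) :
    ∫⁻ a, fracInd p (phase q n a) * fracInd p (phase q n' a) ∂cubeMeasure (Fin (m + 1))
      = ENNReal.ofReal p * ENNReal.ofReal p := by
  obtain ⟨j, hj⟩ := Function.ne_iff.1 hn
  have hq' : (q : ℝ) ≠ 0 := by exact_mod_cast hq.ne'
  have hm : Measurable fun a => fracInd p (phase q n a) * fracInd p (phase q n' a) :=
    ((measurable_fracInd p).comp (measurable_phase q n)).mul
      ((measurable_fracInd p).comp (measurable_phase q n'))
  rw [lintegral_cube_update hm (Fin.last m)]
  set ψ : (Fin m → ℕ) → (Fin (m + 1) → ℝ) → ℝ :=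
    fun n x => q * ∑ i : Fin m, ((n i : ℝ) / q - x i.castSucc) ^ 2 with hψ
  have h1 : ∀ x : Fin (m + 1) → ℝ, ∫⁻ t in Set.Ioc (0 : ℝ) 1,
      fracInd p (phase q n (Function.update x (Fin.last m) t)) *
        fracInd p (phase q n' (Function.update x (Fin.last m) t))
      = fracCorr p (ψ n' x - ψ n x) := fun x => by
    rw [← lintegral_fracInd_mul (k := q) (by exact_mod_cast hq.ne')]
    refine lintegral_congr fun t => ?_
    simp [phase, mul_add, (Fin.castSucc_lt_last _).ne, hψ]
  simp_rw [h1]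
  have hψm : ∀ n, Measurable (ψ n) := fun n => by rw [hψ]; fun_prop
  have hm' : Measurable fun x => fracCorr p (ψ n' x - ψ n x) :=
    (measurable_fracCorr p).comp ((hψm n').sub (hψm n))
  rw [lintegral_cube_update hm' j.castSucc]
  have h2 : ∀ x : Fin (m + 1) → ℝ, ∫⁻ t in Set.Ioc (0 : ℝ) 1,
      fracCorr p (ψ n' (Function.update x j.castSucc t) - ψ n (Function.update x j.castSucc t))
      = ENNReal.ofReal p * ENNReal.ofReal p := fun x => by
    rw [← lintegral_fracCorr hp1]
    -- the quadratic terms in `t` cancel, leaving integer slope `2 (n j - n' j)`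
    rw [← lintegral_periodic_comp_affine (measurable_fracCorr p) (periodic_fracCorr p)
      (k := 2 * ((n j : ℤ) - n' j)) (by
        have : (n j : ℤ) ≠ n' j := by exact_mod_cast hj
        simpa [sub_eq_zero] using this)
      (ψ n' (Function.update x j.castSucc 0) - ψ n (Function.update x j.castSucc 0))]
    refine lintegral_congr fun t => ?_
    congr 1
    have key : ∀ n : Fin m → ℕ, ψ n (Function.update x j.castSucc t)
        = ψ n (Function.update x j.castSucc 0) + (q * t ^ 2 - 2 * n j * t) := fun n => by
      simp only [hψ]
      rw [← Finset.add_sum_erase _ _ (Finset.mem_univ j), ← Finset.add_sum_erase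
        (f := fun i => ((n i : ℝ) / q - Function.update x j.castSucc 0 i.castSucc) ^ 2)
        _ (Finset.mem_univ j)]
      have : ∀ s : ℝ, ∑ i ∈ Finset.univ.erase j,
          ((n i : ℝ) / q - Function.update x j.castSucc s i.castSucc) ^ 2
          = ∑ i ∈ Finset.univ.erase j, ((n i : ℝ) / q - x i.castSucc) ^ 2 := fun s => by
        refine Finset.sum_congr rfl fun i hi => ?_
        rw [Function.update_of_ne]
        simpa using (Finset.mem_erase.1 hi).1
      rw [this, this]
      simp only [Function.update_self]
      field_simp
      ring
    rw [key n, key n']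
    push_cast
    ring
  simp [h2]

/-! ### A second moment bound -/

/-- Chebyshev's inequality for the number of occurrences among pairwise independent events of
equal probability `p`. -/
lemma chebyshev_count {Ω ι : Type*} [MeasurableSpace Ω] {μ : Measure Ω} [IsProbabilityMeasure μ]
    (s : Finset ι) {S : ι → Set Ω} [∀ a, DecidablePred fun i => a ∈ S i]
    (hS : ∀ i, MeasurableSet (S i)) {p : ℝ} (hp : 0 < p)
    (hs : s.Nonempty) (h1 : ∀ i, μ.real (S i) = p)
    (h2 : ∀ i j, i ≠ j → μ.real (S i ∩ S j) = p * p) :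
    μ.real {a | ((s.filter fun i => a ∈ S i).card : ℝ) ≤ s.card * p / 2}
      ≤ 4 / (s.card * p) := by
  classical
  have hc : (0 : ℝ) < s.card := by exact_mod_cast hs.card_pos
  set f : ι → Ω → ℝ := fun i => (S i).indicator 1 with hf
  have hfi : ∀ i, Integrable (f i) μ := fun i => (integrable_const 1).indicator (hS i)
  have hff : ∀ i j, (fun a => f i a * f j a) = (S i ∩ S j).indicator 1 := fun i j => by
    funext a; simp only [hf, Set.inter_indicator_one, Pi.mul_apply]
  have hffi : ∀ i j, Integrable (fun a => f i a * f j a) μ := fun i j => by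
    rw [hff]; exact (integrable_const 1).indicator ((hS i).inter (hS j))
  have hE : ∀ i j, ∫ a, (f i a - p) * (f j a - p) ∂μ = μ.real (S i ∩ S j) - p * p := fun i j => by
    have : (fun a => (f i a - p) * (f j a - p))
        = fun a => f i a * f j a - p * f i a - p * f j a + p * p := by funext a; ring
    have i1 : Integrable (fun a => f i a * f j a - p * f i a) μ :=
      (hffi i j).sub ((hfi i).const_mul p)
    have i2 : Integrable (fun a => f i a * f j a - p * f i a - p * f j a) μ :=
      i1.sub ((hfi j).const_mul p)
    have e1 : ∀ i, ∫ a, f i a ∂μ = p := fun i => by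
      rw [← h1 i]; exact integral_indicator_one (hS i)
    have e2 : ∫ a, f i a * f j a ∂μ = μ.real (S i ∩ S j) := by
      rw [hff]; exact integral_indicator_one ((hS i).inter (hS j))
    rw [this, integral_add i2 (integrable_const _), integral_sub i1 ((hfi j).const_mul p),
      integral_sub (hffi i j) ((hfi i).const_mul p),
      integral_const_mul, integral_const_mul, e1, e1, e2]
    simp
  have hpi : ∀ i j, Integrable (fun a => (f i a - p) * (f j a - p)) μ := fun i j => by
    have : (fun a => (f i a - p) * (f j a - p))
        = fun a => f i a * f j a - p * f i a - p * f j a + p * p := by funext a; ring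
    rw [this]
    exact (((hffi i j).sub ((hfi i).const_mul p)).sub ((hfi j).const_mul p)).add
      (integrable_const _)
  set V : Ω → ℝ := fun a => ∑ i ∈ s, ∑ j ∈ s, (f i a - p) * (f j a - p) with hV
  have hVsq : ∀ a, V a = (((s.filter fun i => a ∈ S i).card : ℝ) - s.card * p) ^ 2 := fun a => by
    have : ((s.filter fun i => a ∈ S i).card : ℝ) - s.card * p = ∑ i ∈ s, (f i a - p) := by
      rw [Finset.sum_sub_distrib, Finset.card_filter]
      simp [hf, Set.indicator]
    rw [this, sq, Finset.sum_mul_sum]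
  have hVi : Integrable V μ :=
    integrable_finsetSum _ fun i _ => integrable_finsetSum _ fun j _ => hpi i j
  have hVE : ∫ a, V a ∂μ ≤ s.card * p := by
    rw [hV, integral_finsetSum _ fun i _ => integrable_finsetSum _ fun j _ => hpi i j]
    have : ∀ i ∈ s, ∫ a, ∑ j ∈ s, (f i a - p) * (f j a - p) ∂μ ≤ p := fun i hi => by
      rw [integral_finsetSum _ fun j _ => hpi i j, Finset.sum_eq_single_of_mem i hi]
      · rw [hE, Set.inter_self, h1]; nlinarith
      · intro j _ hj; rw [hE, h2 i j hj.symm, sub_self]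
    refine (Finset.sum_le_sum this).trans ?_
    simp
  have hM := mul_meas_ge_le_integral_of_nonneg (μ := μ) (f := V)
    (Filter.Eventually.of_forall fun a => by rw [hVsq]; exact sq_nonneg _) hVi
    ((s.card * p / 2) ^ 2)
  have hsub : {a | ((s.filter fun i => a ∈ S i).card : ℝ) ≤ s.card * p / 2}
      ⊆ {a | (s.card * p / 2) ^ 2 ≤ V a} := fun a ha => by
    simp only [Set.mem_ofPred_eq] at ha ⊢
    rw [hVsq]
    have : 0 < s.card * p := by positivity
    nlinarith
  have h3 := measureReal_mono (μ := μ) hsub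
  have hx : 0 < s.card * p := by positivity
  set x := (s.card : ℝ) * p
  rw [le_div_iff₀ hx]
  have h4 : (x / 2) ^ 2 * μ.real {a | ((s.filter fun i => a ∈ S i).card : ℝ) ≤ x / 2} ≤ x :=
    (mul_le_mul_of_nonneg_left h3 (by positivity)).trans (hM.trans hVE)
  by_contra hcon
  push Not at hcon
  nlinarith

/-! ### The scales -/

/-- The exponents of the multi-scale construction. Stage `k` starts from cubes of side `2^(-B k)`;
these are cut into all their dyadic subcubes of side `2^(-(B k + T k))`; in each subcube
`2^(m * g k)` points of the lattice `2^(-A k) ℤ^m` are kept, and each kept point is the corner of a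
cube of side `2^(-B (k+1))` for the next stage. After `k` stages there are `2^(m * E k)` cubes.
The inequalities `le_refine` and `le_E` give dimension `m θ`; `gap` makes dot product sets null;
`count` and `prob` allow the choice of points for most translates. -/
structure Scales (m : ℕ) (θ : ℝ) where
  A : ℕ → ℕ
  B : ℕ → ℕ
  T : ℕ → ℕ
  g : ℕ → ℕ
  E : ℕ → ℕ
  B_zero : B 0 = 0
  E_zero : E 0 = 0
  E_succ : ∀ k, E (k + 1) = E k + T k + g k
  cell_le : ∀ k, B k + T k ≤ A k
  lt_B : ∀ k, A k < B (k + 1)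
  le_refine : ∀ k, θ * A k ≤ E k + T k
  le_E : ∀ k, θ * B k ≤ E k
  ge_E : ∀ k, k ≤ E k
  gap : ∀ k, 2 * A k + k ≤ B (k + 1)
  count : ∀ k, m * g k + m * (B k + T k) + B (k + 1) + 1 ≤ m * A k + A k
  prob : ∀ k, 2 * m * (B k + T k) + B (k + 1) + k + 4 ≤ m * A k + A k

/-- The side exponents of the cubes, growing fast enough for the estimates of `Scales`. -/
def sideExp (M R : ℕ) : ℕ → ℕ
  | 0 => 0
  | k + 1 => (4 * (M + 1) * R + 2 * (M + 1)) * (2 * (M + 1) * sideExp M R k + k + 6)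

/-- The free parameter `t` of stage `k`; all exponents of that stage are linear in it. -/
def stageParam (M R k : ℕ) : ℕ := 2 * (M + 1) * sideExp M R k + k + 6

/-- Logarithmic count of cubes after `k` stages, per coordinate. -/
def countExp (M R S : ℕ) : ℕ → ℕ
  | 0 => 0
  | k + 1 => countExp M R S k + S * stageParam M R k
      + ((M * R + 2 * M) * stageParam M R k - sideExp M R k - 1)

/-- With `t` the parameter of stage `k`, the choice is `A k = 2 (M + 1) R t`, `T k = S t` and
`B (k+1) = 2 A k + 2 (M + 1) t`. The parameter dominates `B k`, so every requirement reduces to an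
inequality between coefficients of `t`. -/
lemma exists_scales {M R S : ℕ} (hM : 2 ≤ M) (hR : 0 < R) (hS : S + 2 * (M + 1) = M * R) :
    Nonempty (Scales (M + 1) ((S : ℝ) / (2 * (M + 1) * R))) := by
  have ht : ∀ k, stageParam M R k = 2 * (M + 1) * sideExp M R k + k + 6 := fun _ => rfl
  have hB : ∀ k, sideExp M R (k + 1) = (4 * (M + 1) * R + 2 * (M + 1)) * stageParam M R k :=
    fun _ => rfl
  have htB : ∀ k, sideExp M R k + k + 6 ≤ stageParam M R k := fun k => by
    rw [ht]; nlinarith [Nat.zero_le (M * sideExp M R k)]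
  -- the truncated subtraction in the number of points kept per subcube is harmless
  have hg : ∀ k, (M * R + 2 * M) * stageParam M R k - sideExp M R k - 1 + sideExp M R k + 1
      = (M * R + 2 * M) * stageParam M R k := fun k => by
    have := htB k
    have h2 : stageParam M R k ≤ (M * R + 2 * M) * stageParam M R k :=
      Nat.le_mul_of_pos_left _ (by positivity)
    omega
  have hES : ∀ k, countExp M R S (k + 1) + sideExp M R k + 1 = countExp M R S k +
      S * stageParam M R k + (M * R + 2 * M) * stageParam M R k := fun k => by
    have := hg k
    simp only [countExp]
    omega
  have hR' : (0 : ℝ) < R := by exact_mod_cast hR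
  refine ⟨{
    A := fun k => 2 * (M + 1) * R * stageParam M R k
    B := sideExp M R
    T := fun k => S * stageParam M R k
    g := fun k => (M * R + 2 * M) * stageParam M R k - sideExp M R k - 1
    E := countExp M R S
    B_zero := rfl
    E_zero := rfl
    E_succ := fun _ => rfl
    cell_le := fun k => ?_
    lt_B := fun k => ?_
    le_refine := fun k => ?_
    le_E := fun k => ?_
    ge_E := fun k => ?_
    gap := fun k => ?_
    count := fun k => ?_
    prob := fun k => ?_ }⟩
  · have := htB k
    have h1 : 2 * (M + 1) * R = S + 2 * (M + 1) + (M + 2) * R := by rw [hS]; ring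
    rw [h1]
    nlinarith [Nat.zero_le ((M + 2) * R * stageParam M R k), Nat.zero_le (M * stageParam M R k)]
  · rw [hB]
    have := htB k
    nlinarith [Nat.zero_le (M * R * stageParam M R k), Nat.zero_le (M * stageParam M R k),
      Nat.zero_le (R * stageParam M R k)]
  · push_cast
    have : (S : ℝ) / (2 * (M + 1) * R) * (2 * (M + 1) * R * stageParam M R k)
        = S * stageParam M R k := by
      field_simp
    rw [this]
    have : (0 : ℝ) ≤ countExp M R S k := by positivity
    linarith
  · rcases k with _ | k
    · simp [sideExp]
    · rw [hB]
      push_cast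
      have h1 : (S : ℝ) / (2 * (M + 1) * R) *
          ((4 * (M + 1) * R + 2 * (M + 1)) * stageParam M R k)
          = (2 * S + S / R) * stageParam M R k := by
        field_simp; ring
      have h2 : (S : ℝ) / R ≤ M := by
        rw [div_le_iff₀ hR']
        have : S ≤ M * R := by omega
        exact_mod_cast this
      have h3 : (countExp M R S (k + 1) : ℝ) + sideExp M R k + 1 = countExp M R S k +
        S * stageParam M R k + (M * R + 2 * M) * stageParam M R k := by exact_mod_cast hES k
      have h4 : (S : ℝ) + 2 * (M + 1) = M * R := by exact_mod_cast hS
      have h5 : (sideExp M R k : ℝ) + k + 6 ≤ stageParam M R k := by exact_mod_cast htB k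
      have h6 : (0 : ℝ) ≤ countExp M R S k := by positivity
      have h7 : (0 : ℝ) ≤ stageParam M R k := by positivity
      have h8 : (2 : ℝ) ≤ M := by exact_mod_cast hM
      have h9 : (0 : ℝ) ≤ k := by positivity
      rw [h1]
      have h10 : (2 * S + S / R) * (stageParam M R k : ℝ)
          ≤ (2 * S + M) * stageParam M R k := by gcongr
      rw [← h4] at h3
      nlinarith [mul_nonneg (by linarith : (0 : ℝ) ≤ M - 2) h7]
  · induction k with
    | zero => simp
    | succ k ih =>
      have := hES k
      have h2 := htB k
      have h3 : 2 * M * stageParam M R k ≤ (M * R + 2 * M) * stageParam M R k := by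
        gcongr; omega
      nlinarith [Nat.zero_le (S * stageParam M R k)]
  · rw [hB]
    have := htB k
    nlinarith [Nat.zero_le (M * R * stageParam M R k), Nat.zero_le (M * stageParam M R k)]
  · rw [hB]
    have h1 := hg k
    set G := (M * R + 2 * M) * stageParam M R k - sideExp M R k - 1
    have h2 : (M + 1) * (G + sideExp M R k + S * stageParam M R k) + (M + 1)
        = (M + 1) * ((M * R + 2 * M) * stageParam M R k + S * stageParam M R k) := by
      rw [← h1]; ring
    have h3 : S * stageParam M R k + 2 * (M + 1) * stageParam M R k
        = M * R * stageParam M R k := by rw [← hS]; ring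
    nlinarith
  · rw [hB]
    have h3 : S * stageParam M R k + 2 * (M + 1) * stageParam M R k
        = M * R * stageParam M R k := by rw [← hS]; ring
    have h4 : stageParam M R k = 2 * (M + 1) * sideExp M R k + k + 6 := rfl
    nlinarith [Nat.zero_le (M * stageParam M R k), Nat.zero_le (M * M * stageParam M R k)]

/-! ### The Cantor set and its coding -/

/-- The lattice points, in units of the lattice spacing, of the half-open cube with index `W`
in a grid of cubes containing `L` lattice points along each edge. -/
def cellPts {m : ℕ} (L : ℕ) (W : Fin m → ℕ) : Finset (Fin m → ℕ) :=
  Fintype.piFinset fun i => Finset.Ico (W i * L) ((W i + 1) * L)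

lemma card_cellPts {m : ℕ} (L : ℕ) (W : Fin m → ℕ) : (cellPts L W).card = L ^ m := by
  simp [cellPts, Fintype.card_piFinset, add_mul]

lemma mem_cellPts {m : ℕ} {L : ℕ} {W n : Fin m → ℕ} :
    n ∈ cellPts L W ↔ ∀ i, W i * L ≤ n i ∧ n i < (W i + 1) * L := by
  simp [cellPts]

/-- The points that, at every stage `k`, lie in a cube of side `2^(-B (k+1))` with corner at an
admissible point of the lattice `2^(-A k) ℤ^m`. -/
def trapSet {m : ℕ} {θ : ℝ} (P : Scales m θ) (Good : ℕ → Set (Fin m → ℕ)) : Set (Fin m → ℝ) :=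
  {u | ∀ k, ∃ n ∈ Good k, (∀ i, n i < 2 ^ P.A k) ∧
    ∀ i, u i ∈ Set.Icc ((n i : ℝ) / 2 ^ P.A k) (n i / 2 ^ P.A k + 1 / 2 ^ P.B (k + 1))}

/-- Every cell of every stage contains enough admissible lattice points. -/
def Rich {m : ℕ} {θ : ℝ} (P : Scales m θ) (Good : ℕ → Set (Fin m → ℕ)) : Prop :=
  ∀ k (W : Fin m → ℕ), (∀ i, W i < 2 ^ (P.B k + P.T k)) →
    ∃ G : Finset (Fin m → ℕ), G ⊆ cellPts (2 ^ (P.A k - (P.B k + P.T k))) W ∧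
      (∀ n ∈ G, n ∈ Good k) ∧ 2 ^ (m * P.g k) ≤ G.card

/-- In each stage-`k` cell `W`, the map `σ k W` injects the `m`-tuples of `g k`-bit digits into the
admissible points of that cell. -/
def IsLabel {m : ℕ} {θ : ℝ} (P : Scales m θ)
    (σ : ℕ → (Fin m → ℕ) → (Fin m → ℕ) → (Fin m → ℕ)) (Good : ℕ → Set (Fin m → ℕ)) : Prop :=
  ∀ k W, (∀ i, W i < 2 ^ (P.B k + P.T k)) →
    (∀ v, (∀ i, v i < 2 ^ P.g k) → σ k W v ∈ Good k ∧
      σ k W v ∈ cellPts (2 ^ (P.A k - (P.B k + P.T k))) W) ∧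
    ∀ v v', (∀ i, v i < 2 ^ P.g k) → (∀ i, v' i < 2 ^ P.g k) →
      σ k W v = σ k W v' → v = v'

lemma Rich.exists_label {m : ℕ} {θ : ℝ} {P : Scales m θ} {Good : ℕ → Set (Fin m → ℕ)}
    (h : Rich P Good) :
    ∃ σ : ℕ → (Fin m → ℕ) → (Fin m → ℕ) → (Fin m → ℕ), IsLabel P σ Good := by
  classical
  have : ∀ k W, ∃ σ : (Fin m → ℕ) → (Fin m → ℕ), (∀ i, W i < 2 ^ (P.B k + P.T k)) →
        (∀ v, (∀ i, v i < 2 ^ P.g k) → σ v ∈ Good k ∧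
          σ v ∈ cellPts (2 ^ (P.A k - (P.B k + P.T k))) W) ∧
        ∀ v v', (∀ i, v i < 2 ^ P.g k) → (∀ i, v' i < 2 ^ P.g k) →
          σ v = σ v' → v = v' := by
    intro k W
    by_cases hW : ∀ i, W i < 2 ^ (P.B k + P.T k)
    swap
    · exact ⟨id, fun h => absurd h hW⟩
    obtain ⟨G, hG1, hG2, hG3⟩ := h k W hW
    set D : Finset (Fin m → ℕ) := Fintype.piFinset fun _ => Finset.range (2 ^ P.g k) with hD
    have hmem : ∀ v, v ∈ D ↔ ∀ i, v i < 2 ^ P.g k := fun v => by simp [hD]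
    have hcard : D.card = 2 ^ (m * P.g k) := by
      simp [hD, Fintype.card_piFinset, ← pow_mul, mul_comm]
    obtain ⟨e⟩ : Nonempty (D ↪ G) :=
      Function.Embedding.nonempty_of_card_le (by simpa [hcard] using hG3)
    refine ⟨fun v => if hv : v ∈ D then (e ⟨v, hv⟩ : Fin m → ℕ) else 0, fun _ => ⟨?_, ?_⟩⟩
    · intro v hv
      simp only [(hmem v).2 hv, dif_pos]
      exact ⟨hG2 _ (e _).2, hG1 (e _).2⟩
    · intro v v' hv hv' heq
      simp only [(hmem v).2 hv, (hmem v').2 hv', dif_pos] at heq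
      simpa using e.injective (Subtype.ext heq)
  choose σ hσ using this
  exact ⟨σ, hσ⟩

section Coding

variable {m : ℕ} {θ : ℝ} (P : Scales m θ) (σ : ℕ → (Fin m → ℕ) → (Fin m → ℕ) → (Fin m → ℕ))

/-- The subcell of the stage-`k` cube `Q` prescribed by the binary digits of `y` in positions
`E k + 1, …, E k + T k`. -/
noncomputable def nextCell (k : ℕ) (Q : Fin m → ℕ) (y : Fin m → ℝ) : Fin m → ℕ :=
  fun i => Q i * 2 ^ P.T k + ⌊2 ^ (P.E k + P.T k) * y i⌋₊ % 2 ^ P.T k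

/-- The lattice point chosen in that subcell, according to the next `g k` binary digits of `y`. -/
noncomputable def nextPt (k : ℕ) (Q : Fin m → ℕ) (y : Fin m → ℝ) : Fin m → ℕ :=
  σ k (nextCell P k Q y) fun i => ⌊2 ^ P.E (k + 1) * y i⌋₊ % 2 ^ P.g k

/-- The corner of the stage-`k` cube coded by `y`, in units of `2^(-B k)`. -/
noncomputable def corner (y : Fin m → ℝ) : ℕ → Fin m → ℕ
  | 0 => 0
  | k + 1 => fun i => nextPt P σ k (corner y k) y i * 2 ^ (P.B (k + 1) - P.A k)

/-- The point of the Cantor set coded by `y`: the common point of the nested cubes. -/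
noncomputable def codedPt (y : Fin m → ℝ) : Fin m → ℝ :=
  fun i => ⨆ k, (corner P σ y k i : ℝ) / 2 ^ P.B k

variable {P σ} {Good : ℕ → Set (Fin m → ℕ)}

lemma nextCell_lt {k : ℕ} {Q : Fin m → ℕ} (hQ : ∀ i, Q i < 2 ^ P.B k) (y : Fin m → ℝ) (i : Fin m) :
    nextCell P k Q y i < 2 ^ (P.B k + P.T k) := by
  have h1 : ⌊2 ^ (P.E k + P.T k) * y i⌋₊ % 2 ^ P.T k < 2 ^ P.T k := Nat.mod_lt _ (by positivity)
  have h2 : (Q i + 1) * 2 ^ P.T k ≤ 2 ^ P.B k * 2 ^ P.T k := Nat.mul_le_mul_right _ (hQ i)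
  rw [pow_add]
  unfold nextCell
  nlinarith

lemma nextPt_lt (hσ : IsLabel P σ Good) {k : ℕ} {Q : Fin m → ℕ} (hQ : ∀ i, Q i < 2 ^ P.B k)
    (y : Fin m → ℝ) (i : Fin m) :
    nextPt P σ k Q y i < 2 ^ P.A k := by
  have h1 := ((hσ k _ (nextCell_lt hQ y)).1 (fun i => ⌊2 ^ P.E (k + 1) * y i⌋₊ % 2 ^ P.g k)
    (fun i => Nat.mod_lt _ (by positivity))).2
  have h2 := (mem_cellPts.1 h1 i).2
  have h3 := nextCell_lt hQ y i
  have h4 : 2 ^ P.A k = 2 ^ (P.B k + P.T k) * 2 ^ (P.A k - (P.B k + P.T k)) := by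
    rw [← pow_add, Nat.add_sub_cancel' (P.cell_le k)]
  rw [h4]
  exact lt_of_lt_of_le h2 (Nat.mul_le_mul_right _ h3)

lemma corner_lt (hσ : IsLabel P σ Good) (y : Fin m → ℝ) (k : ℕ) :
    ∀ i, corner P σ y k i < 2 ^ P.B k := by
  induction k with
  | zero => simp [corner]
  | succ k ih =>
    intro i
    have h4 : 2 ^ P.B (k + 1) = 2 ^ P.A k * 2 ^ (P.B (k + 1) - P.A k) := by
      rw [← pow_add, Nat.add_sub_cancel' (P.lt_B k).le]
    rw [h4]
    exact Nat.mul_lt_mul_of_pos_right (nextPt_lt hσ ih y i) (by positivity)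

/-- Passing to a finer dyadic scale: comparison of a dyadic interval with a subinterval. -/
lemma dyadic_refine {a b x w : ℕ} (hab : a ≤ b) (h1 : w * 2 ^ (b - a) ≤ x)
    (h2 : x < (w + 1) * 2 ^ (b - a)) :
    (w : ℝ) / 2 ^ a ≤ x / 2 ^ b ∧ (x : ℝ) / 2 ^ b + 1 / 2 ^ b ≤ w / 2 ^ a + 1 / 2 ^ a := by
  obtain ⟨c, rfl⟩ := Nat.exists_eq_add_of_le hab
  rw [Nat.add_sub_cancel_left] at h1 h2
  have h1' : (w : ℝ) * 2 ^ c ≤ x := by exact_mod_cast h1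
  have h2' : (x : ℝ) + 1 ≤ (w + 1) * 2 ^ c := by exact_mod_cast h2
  rw [pow_add, ← add_div, ← add_div, div_le_div_iff₀ (by positivity) (by positivity),
    div_le_div_iff₀ (by positivity) (by positivity)]
  have : (0 : ℝ) < 2 ^ a := by positivity
  constructor
  · nlinarith
  · nlinarith

/-- The nesting of cube, subcell and lattice cube in one stage. -/
lemma stage_nested (hσ : IsLabel P σ Good) (y : Fin m → ℝ) (k : ℕ) (i : Fin m) :
    ((corner P σ y k i : ℝ) / 2 ^ P.B k ≤ nextCell P k (corner P σ y k) y i / 2 ^ (P.B k + P.T k) ∧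
      (nextCell P k (corner P σ y k) y i : ℝ) / 2 ^ (P.B k + P.T k) + 1 / 2 ^ (P.B k + P.T k)
        ≤ corner P σ y k i / 2 ^ P.B k + 1 / 2 ^ P.B k) ∧
    ((nextCell P k (corner P σ y k) y i : ℝ) / 2 ^ (P.B k + P.T k)
        ≤ nextPt P σ k (corner P σ y k) y i / 2 ^ P.A k ∧
      (nextPt P σ k (corner P σ y k) y i : ℝ) / 2 ^ P.A k + 1 / 2 ^ P.A k
        ≤ nextCell P k (corner P σ y k) y i / 2 ^ (P.B k + P.T k) + 1 / 2 ^ (P.B k + P.T k)) ∧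
    (corner P σ y (k + 1) i : ℝ) / 2 ^ P.B (k + 1)
      = nextPt P σ k (corner P σ y k) y i / 2 ^ P.A k := by
  refine ⟨?_, ?_, ?_⟩
  · have h1 : ⌊2 ^ (P.E k + P.T k) * y i⌋₊ % 2 ^ P.T k < 2 ^ P.T k := Nat.mod_lt _ (by positivity)
    apply dyadic_refine (Nat.le_add_right _ _)
    · rw [Nat.add_sub_cancel_left]; exact Nat.le_add_right _ _
    · rw [Nat.add_sub_cancel_left]; unfold nextCell; nlinarith
  · have h1 := ((hσ k _ (nextCell_lt (corner_lt hσ y k) y)).1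
      (fun i => ⌊2 ^ P.E (k + 1) * y i⌋₊ % 2 ^ P.g k) (fun i => Nat.mod_lt _ (by positivity))).2
    have h2 := mem_cellPts.1 h1 i
    exact dyadic_refine (P.cell_le k) h2.1 h2.2
  · have h4 : (2 : ℝ) ^ P.B (k + 1) = 2 ^ P.A k * 2 ^ (P.B (k + 1) - P.A k) := by
      rw [← pow_add, Nat.add_sub_cancel' (P.lt_B k).le]
    rw [h4]
    simp only [corner]
    push_cast
    rw [mul_div_mul_right _ _ (by positivity)]

lemma codedPt_mem (hσ : IsLabel P σ Good) (y : Fin m → ℝ) (k : ℕ) (i : Fin m) :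
    codedPt P σ y i ∈ Set.Icc ((corner P σ y k i : ℝ) / 2 ^ P.B k)
      (corner P σ y k i / 2 ^ P.B k + 1 / 2 ^ P.B k) := by
  have h := Monotone.ciSup_mem_iInter_Icc_of_antitone
    (f := fun k => (corner P σ y k i : ℝ) / 2 ^ P.B k)
    (g := fun k => (corner P σ y k i : ℝ) / 2 ^ P.B k + 1 / 2 ^ P.B k)
    (monotone_nat_of_le_succ fun k => by
      obtain ⟨⟨h1, -⟩, ⟨h2, -⟩, h3⟩ := stage_nested hσ y k i
      linarith)
    (antitone_nat_of_succ_le fun k => by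
      obtain ⟨⟨-, h1⟩, ⟨-, h2⟩, h3⟩ := stage_nested hσ y k i
      have h4 : (1 : ℝ) / 2 ^ P.B (k + 1) ≤ 1 / 2 ^ P.A k :=
        one_div_le_one_div_of_le (by positivity)
          (pow_le_pow_right₀ (by norm_num) (P.lt_B k).le)
      linarith)
    (fun k => le_add_of_nonneg_right (by positivity))
  exact Set.mem_iInter.1 h k

lemma codedPt_mem_trapSet (hσ : IsLabel P σ Good) (y : Fin m → ℝ) :
    codedPt P σ y ∈ trapSet P Good := by
  intro k
  refine ⟨nextPt P σ k (corner P σ y k) y, ?_, nextPt_lt hσ (corner_lt hσ y k) y, fun i => ?_⟩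
  · exact ((hσ k _ (nextCell_lt (corner_lt hσ y k) y)).1 _
      (fun i => Nat.mod_lt _ (by positivity))).1
  · have := codedPt_mem hσ y (k + 1) i
    rwa [(stage_nested hσ y k i).2.2] at this

lemma floor_two_pow_add (a b : ℕ) (x : ℝ) :
    ⌊2 ^ (a + b) * x⌋₊ / 2 ^ b = ⌊2 ^ a * x⌋₊ := by
  have := Nat.floor_div_natCast ((2 : ℝ) ^ (a + b) * x) (2 ^ b)
  rw [← this]
  congr 1
  push_cast
  rw [pow_add]
  field_simp

/-- The stage-`k` cube determines the first `E k` binary digits of its code. -/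
lemma floor_eq_of_corner_eq (hσ : IsLabel P σ Good) {y y' : Fin m → ℝ} (k : ℕ)
    (hy : ∀ i, 0 ≤ y i ∧ y i < 1)
    (hy' : ∀ i, 0 ≤ y' i ∧ y' i < 1) (h : corner P σ y k = corner P σ y' k) :
    ∀ i, ⌊2 ^ P.E k * y i⌋₊ = ⌊2 ^ P.E k * y' i⌋₊ := by
  induction k with
  | zero =>
    intro i
    rw [P.E_zero]
    rw [Nat.floor_eq_zero.2 (by simpa using (hy i).2), Nat.floor_eq_zero.2 (by simpa using (hy' i).2)]
  | succ k ih =>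
    have hpt : nextPt P σ k (corner P σ y k) y = nextPt P σ k (corner P σ y' k) y' := by
      funext i
      have := congrFun h i
      simp only [corner] at this
      exact Nat.eq_of_mul_eq_mul_right (by positivity) this
    have hm := fun y => mem_cellPts.1 ((hσ k _ (nextCell_lt (corner_lt hσ y k) y)).1
      (fun i => ⌊2 ^ P.E (k + 1) * y i⌋₊ % 2 ^ P.g k) (fun i => Nat.mod_lt _ (by positivity))).2
    have hcell : nextCell P k (corner P σ y k) y = nextCell P k (corner P σ y' k) y' := by
      funext i
      have e : ∀ y, nextPt P σ k (corner P σ y k) y i / 2 ^ (P.A k - (P.B k + P.T k))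
          = nextCell P k (corner P σ y k) y i := fun y =>
        Nat.div_eq_of_lt_le (hm y i).1 (hm y i).2
      rw [← e, ← e, hpt]
    have hdigits : ∀ i, corner P σ y k i = corner P σ y' k i ∧
        ⌊2 ^ (P.E k + P.T k) * y i⌋₊ % 2 ^ P.T k = ⌊2 ^ (P.E k + P.T k) * y' i⌋₊ % 2 ^ P.T k := by
      intro i
      have hc := congrFun hcell i
      simp only [nextCell] at hc
      have h1 : ⌊2 ^ (P.E k + P.T k) * y i⌋₊ % 2 ^ P.T k < 2 ^ P.T k := Nat.mod_lt _ (by positivity)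
      have h2 : ⌊2 ^ (P.E k + P.T k) * y' i⌋₊ % 2 ^ P.T k < 2 ^ P.T k :=
        Nat.mod_lt _ (by positivity)
      have h3 : corner P σ y k i = corner P σ y' k i := by
        have := congrArg (· / 2 ^ P.T k) hc
        simpa [Nat.add_div_of_dvd_right, Nat.div_eq_of_lt h1, Nat.div_eq_of_lt h2] using this
      rw [h3] at hc
      exact ⟨h3, Nat.add_left_cancel hc⟩
    have hE := ih (funext fun i => (hdigits i).1)
    have hET : ∀ i, ⌊2 ^ (P.E k + P.T k) * y i⌋₊ = ⌊2 ^ (P.E k + P.T k) * y' i⌋₊ := fun i => by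
      rw [← Nat.div_add_mod ⌊2 ^ (P.E k + P.T k) * y i⌋₊ (2 ^ P.T k),
        ← Nat.div_add_mod ⌊2 ^ (P.E k + P.T k) * y' i⌋₊ (2 ^ P.T k), floor_two_pow_add,
        floor_two_pow_add, hE, (hdigits i).2]
    have hlast := (hσ k _ (nextCell_lt (corner_lt hσ y k) y)).2 _ _
      (fun i => Nat.mod_lt _ (by positivity)) (fun i => Nat.mod_lt _ (by positivity))
      (hpt.trans (by unfold nextPt; rw [hcell]))
    intro i
    have hl := congrFun hlast i
    simp only [P.E_succ] at hl ⊢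
    rw [← Nat.div_add_mod ⌊2 ^ (P.E k + P.T k + P.g k) * y i⌋₊ (2 ^ P.g k),
        ← Nat.div_add_mod ⌊2 ^ (P.E k + P.T k + P.g k) * y' i⌋₊ (2 ^ P.g k), floor_two_pow_add,
        floor_two_pow_add, hET, hl]

end Coding

/-! ### Dimension of the Cantor set -/

lemma abs_sub_le_floor {x x' : ℝ} (hx : 0 ≤ x) (hx' : 0 ≤ x') :
    |x - x'| ≤ |(⌊x⌋₊ : ℝ) - ⌊x'⌋₊| + 1 := by
  have h1 := Nat.floor_le hx
  have h2 := Nat.lt_floor_add_one x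
  have h3 := Nat.floor_le hx'
  have h4 := Nat.lt_floor_add_one x'
  have h5 := le_abs_self ((⌊x⌋₊ : ℝ) - ⌊x'⌋₊)
  have h6 := neg_abs_le ((⌊x⌋₊ : ℝ) - ⌊x'⌋₊)
  rw [abs_le]
  constructor <;> linarith

/-- A power of two with exponent at least `θ b` dominates the `θ`-th power of `2^b`. -/
lemma rpow_two_pow_le {θ : ℝ} {b e : ℕ} (h : θ * b ≤ e) :
    ((2 : ℝ) ^ b) ^ θ ≤ 2 ^ e := by
  rw [← Real.rpow_natCast, ← Real.rpow_natCast, ← Real.rpow_mul (by norm_num), mul_comm]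
  exact Real.rpow_le_rpow_of_exponent_le (by norm_num) h

section Holder

variable {m : ℕ} {θ : ℝ} {P : Scales m θ} {σ : ℕ → (Fin m → ℕ) → (Fin m → ℕ) → (Fin m → ℕ)}
  {Good : ℕ → Set (Fin m → ℕ)}

/-- Distinct points have codes that agree up to some stage `k` and differ at stage `k + 1`. -/
lemma exists_stage_ne (hσ : IsLabel P σ Good) {y y' : Fin m → ℝ} (hy : ∀ i, 0 ≤ y i ∧ y i < 1)
    (hy' : ∀ i, 0 ≤ y' i ∧ y' i < 1) (hne : y ≠ y') :
    ∃ k, corner P σ y k = corner P σ y' k ∧ corner P σ y (k + 1) ≠ corner P σ y' (k + 1) := by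
  by_contra hcon
  push Not at hcon
  have hall : ∀ k, corner P σ y k = corner P σ y' k := fun k => by
    induction k with
    | zero => rfl
    | succ k ih => exact hcon k ih
  apply hne
  funext i
  have hb : ∀ k : ℕ, |y i - y' i| ≤ (1 / 2) ^ k := fun k => by
    have h1 := floor_eq_of_corner_eq hσ k hy hy' (hall k) i
    have h2 := abs_sub_le_floor (x := 2 ^ P.E k * y i) (x' := 2 ^ P.E k * y' i)
      (mul_nonneg (by positivity) (hy i).1) (mul_nonneg (by positivity) (hy' i).1)
    rw [h1, sub_self, abs_zero, zero_add, ← mul_sub, abs_mul, abs_of_pos (by positivity)] at h2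
    have h3 : (2 : ℝ) ^ k ≤ 2 ^ P.E k := pow_le_pow_right₀ (by norm_num) (P.ge_E k)
    rw [one_div, inv_pow, ← one_div, le_div_iff₀ (by positivity)]
    nlinarith [abs_nonneg (y i - y' i)]
  have h0 : |y i - y' i| ≤ 0 :=
    ge_of_tendsto' (tendsto_pow_atTop_nhds_zero_of_lt_one (by norm_num) (by norm_num)) hb
  exact sub_eq_zero.1 (abs_nonpos_iff.1 h0)

/-- The decoding map is `θ`-Hölder. If the codes part ways at stage `k`, either the points lie in
equal or adjacent subcells, and then separation of the lattice `2^(-A k) ℤ^m` suffices; or the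
distance of the subcells is comparable to the distance of the points. -/
lemma dist_le_dist_codedPt (hσ : IsLabel P σ Good) (hθ0 : 0 < θ) (hθ1 : θ ≤ 1) {y y' : Fin m → ℝ}
    (hy : ∀ i, 0 ≤ y i ∧ y i < 1) (hy' : ∀ i, 0 ≤ y' i ∧ y' i < 1) :
    dist y y' ≤ 4 * dist (codedPt P σ y) (codedPt P σ y') ^ θ := by
  rcases eq_or_ne y y' with rfl | hne
  · simp [Real.zero_rpow hθ0.ne']
  obtain ⟨k, hk, hk1⟩ := exists_stage_ne hσ hy hy' hne
  have hfl := floor_eq_of_corner_eq hσ k hy hy' hk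
  set u := codedPt P σ y
  set u' := codedPt P σ y'
  have hd : ∀ i, |u i - u' i| ≤ dist u u' := fun i => by
    rw [← Real.dist_eq]; exact dist_le_pi_dist u u' i
  refine (dist_pi_le_iff (by positivity)).2 fun i => ?_
  rw [Real.dist_eq]
  set W := nextCell P k (corner P σ y k) y with hW
  set W' := nextCell P k (corner P σ y' k) y' with hW'
  have hWW : (⌊2 ^ (P.E k + P.T k) * y i⌋₊ : ℝ) - ⌊2 ^ (P.E k + P.T k) * y' i⌋₊
      = (W i : ℝ) - W' i := by
    have h1 := Nat.div_add_mod ⌊2 ^ (P.E k + P.T k) * y i⌋₊ (2 ^ P.T k)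
    have h2 := Nat.div_add_mod ⌊2 ^ (P.E k + P.T k) * y' i⌋₊ (2 ^ P.T k)
    rw [floor_two_pow_add] at h1 h2
    rw [← h1, ← h2, hfl i]
    simp only [hW, hW', nextCell, hk]
    push_cast
    ring
  have hyy := abs_sub_le_floor (x := 2 ^ (P.E k + P.T k) * y i) (x' := 2 ^ (P.E k + P.T k) * y' i)
      (mul_nonneg (by positivity) (hy i).1) (mul_nonneg (by positivity) (hy' i).1)
  rw [hWW, ← mul_sub, abs_mul, abs_of_pos (by positivity)] at hyy
  have hpow : (0 : ℝ) < 2 ^ (P.E k + P.T k) := by positivity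
  rcases le_or_gt (|(W i : ℝ) - W' i|) 1 with hD | hD
  · -- some coordinate of the two lattice points differs
    obtain ⟨j, hj⟩ := Function.ne_iff.1 hk1
    have hnj : nextPt P σ k (corner P σ y k) y j ≠ nextPt P σ k (corner P σ y' k) y' j := by
      intro he
      apply hj
      simp only [corner, he]
    obtain ⟨-, -, e1⟩ := stage_nested hσ y k j
    obtain ⟨-, -, e2⟩ := stage_nested hσ y' k j
    have c1 := codedPt_mem hσ y (k + 1) j
    have c2 := codedPt_mem hσ y' (k + 1) j
    rw [e1] at c1
    rw [e2] at c2
    set n := nextPt P σ k (corner P σ y k) y j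
    set n' := nextPt P σ k (corner P σ y' k) y' j
    have hlow : (1 : ℝ) / 2 ^ (P.A k + 1) ≤ |u j - u' j| := by
      have hB : (1 : ℝ) / 2 ^ P.B (k + 1) ≤ 1 / 2 ^ (P.A k + 1) :=
        one_div_le_one_div_of_le (by positivity) (pow_le_pow_right₀ (by norm_num) (P.lt_B k))
      have hA : (1 : ℝ) / 2 ^ P.A k = 2 * (1 / 2 ^ (P.A k + 1)) := by
        rw [pow_succ]; field_simp
      rcases lt_or_gt_of_ne hnj with hlt | hlt
      · have h1 : ((n : ℝ) + 1) / 2 ^ P.A k ≤ n' / 2 ^ P.A k := by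
          gcongr; exact_mod_cast hlt
        rw [add_div] at h1
        rw [abs_sub_comm]
        refine le_trans ?_ (le_abs_self _)
        linarith [c1.2, c2.1]
      · have h1 : ((n' : ℝ) + 1) / 2 ^ P.A k ≤ n / 2 ^ P.A k := by
          gcongr; exact_mod_cast hlt
        rw [add_div] at h1
        refine le_trans ?_ (le_abs_self _)
        linarith [c2.2, c1.1]
    have h1 : ((1 : ℝ) / 2 ^ (P.A k + 1)) ^ θ ≤ dist u u' ^ θ :=
      Real.rpow_le_rpow (by positivity) (hlow.trans (hd j)) hθ0.le
    have h2 : ((2 : ℝ) ^ (P.A k + 1)) ^ θ ≤ 2 ^ (P.E k + P.T k + 1) := by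
      apply rpow_two_pow_le
      have := P.le_refine k
      push_cast
      nlinarith
    have h3 : (1 : ℝ) / 2 ^ (P.E k + P.T k + 1) ≤ dist u u' ^ θ := by
      refine le_trans ?_ h1
      rw [Real.div_rpow zero_le_one (by positivity), Real.one_rpow]
      exact one_div_le_one_div_of_le (by positivity) h2
    rw [div_le_iff₀ (by positivity), pow_succ] at h3
    have h4 : 2 ^ (P.E k + P.T k) * |y i - y' i|
        ≤ 2 ^ (P.E k + P.T k) * (4 * dist u u' ^ θ) := by linarith
    exact le_of_mul_le_mul_left h4 hpow
  · obtain ⟨a1, b1, e1⟩ := stage_nested hσ y k i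
    obtain ⟨a2, b2, e2⟩ := stage_nested hσ y' k i
    have c1 := codedPt_mem hσ y (k + 1) i
    have c2 := codedPt_mem hσ y' (k + 1) i
    have c3 := codedPt_mem hσ y k i
    have c4 := codedPt_mem hσ y' k i
    rw [e1] at c1
    rw [e2] at c2
    rw [← hk] at c4
    have hB : (1 : ℝ) / 2 ^ P.B (k + 1) ≤ 1 / 2 ^ P.A k :=
      one_div_le_one_div_of_le (by positivity) (pow_le_pow_right₀ (by norm_num) (P.lt_B k).le)
    set z := |u i - u' i| with hz
    have hz0 : 0 ≤ z := abs_nonneg _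
    have hzB : z ≤ 1 / 2 ^ P.B k := by
      rw [hz, abs_le]
      constructor <;> linarith [c3.1, c3.2, c4.1, c4.2]
    -- distinct nonadjacent subcells: the index difference is an integer exceeding one
    have hD2 : (2 : ℝ) ≤ |(W i : ℝ) - W' i| := by
      have : (1 : ℤ) < |(W i : ℤ) - W' i| := by exact_mod_cast hD
      have : (2 : ℤ) ≤ |(W i : ℤ) - W' i| := this
      exact_mod_cast this
    have hzW : |(W i : ℝ) - W' i| ≤ 2 ^ (P.B k + P.T k) * z + 1 := by
      have hp : (0 : ℝ) < 2 ^ (P.B k + P.T k) := by positivity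
      have key : ∀ w w' v v' : ℝ, w / 2 ^ (P.B k + P.T k) ≤ v →
          v' ≤ w' / 2 ^ (P.B k + P.T k) + 1 / 2 ^ (P.B k + P.T k) →
          w - w' ≤ 2 ^ (P.B k + P.T k) * (v - v') + 1 := by
        intro w w' v v' h1 h2
        rw [div_le_iff₀ hp] at h1
        rw [← add_div, le_div_iff₀ hp] at h2
        linarith
      have k1 := key (W i) (W' i) (u i) (u' i) (b1.1.trans c1.1) (by linarith [b2.2, c2.2])
      have k2 := key (W' i) (W i) (u' i) (u i) (b2.1.trans c2.1) (by linarith [b1.2, c1.2])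
      have k3 : 2 ^ (P.B k + P.T k) * (u i - u' i) ≤ 2 ^ (P.B k + P.T k) * z :=
        mul_le_mul_of_nonneg_left (le_abs_self _) hp.le
      have k4 : 2 ^ (P.B k + P.T k) * (u' i - u i) ≤ 2 ^ (P.B k + P.T k) * z :=
        mul_le_mul_of_nonneg_left (by rw [hz, abs_sub_comm]; exact le_abs_self _) hp.le
      rw [abs_le]
      constructor <;> linarith
    have hy4 : 2 ^ (P.E k + P.T k) * |y i - y' i| ≤ 4 * (2 ^ (P.B k + P.T k) * z) := by linarith
    have hy5 : 2 ^ P.E k * |y i - y' i| ≤ 4 * (2 ^ P.B k * z) := by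
      rw [pow_add, pow_add] at hy4
      have hp : (0 : ℝ) < 2 ^ P.T k := by positivity
      refine le_of_mul_le_mul_left ?_ hp
      linarith
    have hzz : 2 ^ P.B k * z ≤ 2 ^ P.E k * z ^ θ := by
      have hp : (0 : ℝ) < 2 ^ P.B k := by positivity
      rw [le_div_iff₀ hp] at hzB
      have h1 : 2 ^ P.B k * z ≤ (2 ^ P.B k * z) ^ θ := by
        have h := Real.rpow_le_rpow_of_exponent_ge' (x := 2 ^ P.B k * z) (by positivity)
          (by linarith) hθ0.le hθ1
        rwa [Real.rpow_one] at h
      rw [Real.mul_rpow hp.le hz0] at h1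
      exact h1.trans (mul_le_mul_of_nonneg_right (rpow_two_pow_le (P.le_E k)) (by positivity))
    have h6 : |y i - y' i| ≤ 4 * z ^ θ := by
      have hp : (0 : ℝ) < 2 ^ P.E k := by positivity
      refine le_of_mul_le_mul_left ?_ hp
      linarith
    refine h6.trans ?_
    gcongr
    exact hd i

end Holder

/-- The inverse of the coding is a `θ`-Hölder map from a subset of the Cantor set onto `[0, 1)^m`. -/
lemma Rich.le_dimH_trapSet {m : ℕ} {θ : ℝ} {P : Scales m θ} {Good : ℕ → Set (Fin m → ℕ)}
    (h : Rich P Good) (hθ0 : 0 < θ) (hθ1 : θ ≤ 1) :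
    ENNReal.ofReal (m * θ) ≤ dimH (trapSet P Good) := by
  obtain ⟨σ, hσ⟩ := h.exists_label
  set Y : Set (Fin m → ℝ) := Set.univ.pi fun _ => Set.Ico (0 : ℝ) 1 with hY
  have hYmem : ∀ y ∈ Y, ∀ i, 0 ≤ y i ∧ y i < 1 := fun y hy i => hy i (Set.mem_univ i)
  have hinj : Set.InjOn (codedPt P σ) Y := fun y hy y' hy' he => by
    have := dist_le_dist_codedPt hσ hθ0 hθ1 (hYmem y hy) (hYmem y' hy')
    rw [he, dist_self, Real.zero_rpow hθ0.ne', mul_zero] at this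
    exact dist_le_zero.1 this
  set f := Function.invFunOn (codedPt P σ) Y with hf
  have hleft : ∀ y ∈ Y, f (codedPt P σ y) = y := fun y hy => hinj.leftInvOn_invFunOn hy
  have hol : HolderOnWith 4 θ.toNNReal f (codedPt P σ '' Y) := by
    rintro _ ⟨y, hy, rfl⟩ _ ⟨y', hy', rfl⟩
    rw [hleft y hy, hleft y' hy', edist_dist, edist_dist,
      Real.coe_toNNReal θ hθ0.le]
    have h1 := dist_le_dist_codedPt hσ hθ0 hθ1 (hYmem y hy) (hYmem y' hy')
    refine (ENNReal.ofReal_le_ofReal h1).trans ?_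
    rw [ENNReal.ofReal_mul (by norm_num), ENNReal.ofReal_rpow_of_nonneg dist_nonneg hθ0.le]
    simp
  have hd := hol.dimH_image_le (Real.toNNReal_pos.2 hθ0)
  have himg : f '' (codedPt P σ '' Y) = Y := by
    rw [Set.image_image]
    ext y
    constructor
    · rintro ⟨y', hy', rfl⟩
      change f (codedPt P σ y') ∈ Y
      rwa [hleft y' hy']
    · intro hy; exact ⟨y, hy, hleft y hy⟩
  have hYd : dimH Y = m := by
    rw [Real.dimH_of_nonempty_interior]
    · simp
    · rw [hY, interior_pi_set Set.finite_univ]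
      refine ⟨fun _ => 1 / 2, fun i _ => ?_⟩
      change (1 / 2 : ℝ) ∈ interior (Set.Ico (0 : ℝ) 1)
      rw [interior_Ico]
      constructor <;> norm_num
  rw [himg, hYd] at hd
  have hsub : codedPt P σ '' Y ⊆ trapSet P Good := by
    rintro _ ⟨y, -, rfl⟩; exact codedPt_mem_trapSet hσ y
  refine le_trans ?_ (dimH_mono hsub)
  change _ ≤ _ / ENNReal.ofReal θ at hd
  rw [ENNReal.le_div_iff_mul_le (Or.inl (by simpa using hθ0)) (Or.inl ENNReal.ofReal_ne_top)] at hd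
  rw [ENNReal.ofReal_mul (by positivity), ENNReal.ofReal_natCast]
  exact hd

/-! ### Admissible lattice points for a random translate -/

/-- The lattice points `n` at stage `k` over which the height of the paraboloid translated by `a`
lies within `2^(-B (k+1))` above the lattice `2^(-A k) ℤ`. -/
def goodPts {m : ℕ} {θ : ℝ} (P : Scales m θ) (a : Fin (m + 1) → ℝ) (k : ℕ) : Set (Fin m → ℕ) :=
  {n | Int.fract (phase (2 ^ P.A k) n a) < 1 / 2 ^ (P.B (k + 1) - P.A k)}

lemma measurableSet_fract_phase {m : ℕ} (q : ℕ) (n : Fin m → ℕ) (p : ℝ) :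
    MeasurableSet {a | Int.fract (phase q n a) < p} :=
  measurableSet_lt ((measurable_phase q n).fract) measurable_const

lemma real_fract_phase {m : ℕ} {q : ℕ} (hq : 0 < q) (n : Fin m → ℕ) {p : ℝ} (hp : 0 < p)
    (hp1 : p ≤ 1) :
    (cubeMeasure (Fin (m + 1))).real {a | Int.fract (phase q n a) < p} = p := by
  have h := lintegral_phase hq n hp1
  have h2 : (fun a => fracInd p (phase q n a))
      = {a | Int.fract (phase q n a) < p}.indicator 1 := by
    ext a; simp [fracInd, Set.indicator]
  rw [h2, lintegral_indicator_one (measurableSet_fract_phase q n p)] at h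
  rw [measureReal_def, h, ENNReal.toReal_ofReal hp.le]

lemma real_fract_phase_inter {m : ℕ} {q : ℕ} (hq : 0 < q) {n n' : Fin m → ℕ} (hn : n ≠ n')
    {p : ℝ} (hp : 0 < p) (hp1 : p ≤ 1) :
    (cubeMeasure (Fin (m + 1))).real
      ({a | Int.fract (phase q n a) < p} ∩ {a | Int.fract (phase q n' a) < p}) = p * p := by
  have h := lintegral_phase_mul hq hn hp1
  have h2 : (fun a => fracInd p (phase q n a) * fracInd p (phase q n' a))
      = ({a | Int.fract (phase q n a) < p} ∩ {a | Int.fract (phase q n' a) < p}).indicator 1 := by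
    ext a
    by_cases h1 : Int.fract (phase q n a) < p <;> by_cases h2 : Int.fract (phase q n' a) < p <;>
      simp [fracInd, Set.indicator, h1, h2]
  rw [h2, lintegral_indicator_one ((measurableSet_fract_phase q n p).inter
    (measurableSet_fract_phase q n' p))] at h
  rw [measureReal_def, h, ← ENNReal.ofReal_mul hp.le, ENNReal.toReal_ofReal (by positivity)]

open Classical in
/-- The translates for which some stage-`k` cell has too few admissible points. -/
noncomputable def badSet {m : ℕ} {θ : ℝ} (P : Scales m θ) (k : ℕ) : Set (Fin (m + 1) → ℝ) :=
  ⋃ W ∈ Fintype.piFinset fun _ : Fin m => Finset.range (2 ^ (P.B k + P.T k)),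
    {a | (((cellPts (2 ^ (P.A k - (P.B k + P.T k))) W).filter
      fun n => n ∈ goodPts P a k).card : ℝ) ≤
        (cellPts (2 ^ (P.A k - (P.B k + P.T k))) W).card * (1 / 2 ^ (P.B (k + 1) - P.A k)) / 2}

/-- Chebyshev's inequality in each cell and a union bound over the cells. -/
lemma cubeMeasure_badSet_le {m : ℕ} {θ : ℝ} (P : Scales m θ) (k : ℕ) :
    (cubeMeasure (Fin (m + 1))).real (badSet P k) ≤ 1 / 2 ^ (k + 2) := by
  classical
  set C := P.B k + P.T k with hC
  set D := P.B (k + 1) - P.A k with hD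
  have hcell : C ≤ P.A k := P.cell_le k
  have hlt := P.lt_B k
  unfold badSet
  refine (measureReal_biUnion_finset_le _ _).trans ?_
  have hp1 : (1 : ℝ) / 2 ^ D ≤ 1 := by
    rw [div_le_one (by positivity)]; exact one_le_pow₀ (by norm_num)
  have key : ∀ W ∈ Fintype.piFinset fun _ : Fin m => Finset.range (2 ^ C),
      (cubeMeasure (Fin (m + 1))).real {a | (((cellPts (2 ^ (P.A k - C)) W).filter
        fun n => n ∈ goodPts P a k).card : ℝ) ≤
        (cellPts (2 ^ (P.A k - C)) W).card * (1 / 2 ^ D) / 2}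
      ≤ 4 / ((2 : ℝ) ^ (m * (P.A k - C)) * (1 / 2 ^ D)) := by
    intro W _
    have hcard : ((cellPts (2 ^ (P.A k - C)) W).card : ℝ) = 2 ^ (m * (P.A k - C)) := by
      rw [card_cellPts]; push_cast; rw [← pow_mul, mul_comm]
    rw [← hcard]
    refine chebyshev_count (μ := cubeMeasure (Fin (m + 1))) (cellPts (2 ^ (P.A k - C)) W)
      (S := fun n => {a | Int.fract (phase (2 ^ P.A k) n a) < 1 / 2 ^ D})
      (fun n => measurableSet_fract_phase _ n _) (by positivity) ?_
      (fun n => real_fract_phase (by positivity) n (by positivity) hp1)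
      (fun n n' hn => real_fract_phase_inter (by positivity) hn (by positivity) hp1)
    rw [← Finset.card_pos, card_cellPts]; positivity
  refine (Finset.sum_le_sum key).trans ?_
  rw [Finset.sum_const, Fintype.card_piFinset]
  simp only [Finset.card_range, Finset.prod_const, Finset.card_univ, Fintype.card_fin, nsmul_eq_mul]
  have hprob := P.prob k
  have e1 : m * C + 2 + D + (k + 2) ≤ m * (P.A k - C) := by
    rw [← hC] at hprob
    zify [hcell, hlt.le, hD] at hprob ⊢
    nlinarith
  have e2 : (2 : ℝ) ^ (m * C + 2 + D + (k + 2)) ≤ 2 ^ (m * (P.A k - C)) :=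
    pow_le_pow_right₀ (by norm_num) e1
  push_cast
  rw [mul_one_div, div_div_eq_mul_div, mul_div_assoc', div_le_div_iff₀ (by positivity)
    (by positivity), one_mul]
  refine le_trans (le_of_eq ?_) e2
  rw [← pow_mul, pow_add, pow_add, pow_add, pow_add, mul_comm C m]
  norm_num [pow_add]
  ring

lemma rich_goodPts {m : ℕ} {θ : ℝ} (P : Scales m θ) {a : Fin (m + 1) → ℝ}
    (ha : ∀ k, a ∉ badSet P k) : Rich P (goodPts P a) := by
  classical
  intro k W hW
  refine ⟨(cellPts (2 ^ (P.A k - (P.B k + P.T k))) W).filter fun n => n ∈ goodPts P a k,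
    Finset.filter_subset _ _, fun n hn => (Finset.mem_filter.1 hn).2, ?_⟩
  have h := ha k
  simp only [badSet, Set.mem_iUnion, not_exists] at h
  have h' := h W (by simpa using hW)
  simp only [Set.mem_ofPred_eq, not_le] at h'
  have hcell := P.cell_le k
  have hlt := P.lt_B k
  have hcount := P.count k
  set C := P.B k + P.T k with hC
  set D := P.B (k + 1) - P.A k with hD
  have e1 : m * P.g k + 1 + D ≤ m * (P.A k - C) := by
    zify [hcell, hlt.le, hD] at hcount ⊢
    nlinarith
  have e2 : (2 : ℝ) ^ (m * P.g k + 1 + D) ≤ 2 ^ (m * (P.A k - C)) :=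
    pow_le_pow_right₀ (by norm_num) e1
  have e3 : (2 : ℝ) ^ (m * P.g k) ≤ (cellPts (2 ^ (P.A k - C)) W).card * (1 / 2 ^ D) / 2 := by
    rw [card_cellPts, mul_one_div, div_div, le_div_iff₀ (by positivity)]
    push_cast
    rw [← pow_mul, mul_comm (P.A k - C) m]
    refine le_trans (le_of_eq ?_) e2
    rw [pow_add, pow_add]; ring
  have e4 := e3.trans_lt h'
  exact_mod_cast e4.le

/-- A positive proportion of the translates in the unit cube are in no bad set. -/
lemma volume_translates_pos {m : ℕ} {θ : ℝ} (P : Scales m θ) :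
    0 < volume ((Set.univ.pi fun _ : Fin (m + 1) => Set.Ioc (0 : ℝ) 1) \ ⋃ k, badSet P k) := by
  set μ := cubeMeasure (Fin (m + 1)) with hμ
  have hbad : μ (⋃ k, badSet P k) ≤ ENNReal.ofReal (1 / 2) := by
    refine (measure_iUnion_le _).trans ?_
    have hs : HasSum (fun k : ℕ => (1 : ℝ) / 2 ^ (k + 2)) (1 / 2) := by
      have h := hasSum_geometric_two.mul_left (1 / 4 : ℝ)
      have hfun : (fun k : ℕ => (1 : ℝ) / 2 ^ (k + 2)) = fun k : ℕ => 1 / 4 * (1 / 2) ^ k := by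
        funext k; rw [pow_add, one_div_pow]; field_simp; norm_num
      rw [hfun]
      norm_num at h ⊢
      exact h
    rw [← hs.tsum_eq, ENNReal.ofReal_tsum_of_nonneg (fun k => by positivity) hs.summable]
    refine ENNReal.tsum_le_tsum fun k => ?_
    rw [← ofReal_measureReal]
    exact ENNReal.ofReal_le_ofReal (cubeMeasure_badSet_le P k)
  have hcube : μ (Set.univ.pi fun _ : Fin (m + 1) => Set.Ioc (0 : ℝ) 1) = 1 := by
    rw [hμ, cubeMeasure, Measure.pi_pi]; simp
  refine lt_of_lt_of_le ?_ (cubeMeasure_le_volume (Fin (m + 1)) _)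
  refine lt_of_lt_of_le ?_ le_measure_sdiff
  rw [hcube, tsub_pos_iff_lt]
  refine hbad.trans_lt ?_
  rw [ENNReal.ofReal_lt_one]; norm_num

/-! ### The lifted Cantor set -/

/-- The point of the paraboloid translated by `a` that lies over `u`. -/
noncomputable def liftPt {m : ℕ} (a : Fin (m + 1) → ℝ) (u : Fin m → ℝ) :
    EuclideanSpace ℝ (Fin (m + 1)) :=
  WithLp.toLp 2 (Fin.snoc (α := fun _ => ℝ) u
    (a (Fin.last m) + ∑ i : Fin m, (u i - a i.castSucc) ^ 2))

@[simp] lemma liftPt_castSucc {m : ℕ} (a : Fin (m + 1) → ℝ) (u : Fin m → ℝ) (i : Fin m) :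
    liftPt a u i.castSucc = u i := by simp [liftPt]

@[simp] lemma liftPt_last {m : ℕ} (a : Fin (m + 1) → ℝ) (u : Fin m → ℝ) :
    liftPt a u (Fin.last m) = a (Fin.last m) + ∑ i : Fin m, (u i - a i.castSucc) ^ 2 := by
  simp [liftPt]

lemma continuous_liftPt {m : ℕ} (a : Fin (m + 1) → ℝ) : Continuous (liftPt a) := by
  refine (PiLp.continuous_toLp 2 _).comp (continuous_pi fun j => ?_)
  refine Fin.lastCases ?_ (fun i => ?_) j
  · simp only [Fin.snoc_last]; fun_prop
  · simp only [Fin.snoc_castSucc]; fun_prop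

lemma liftPt_mem_translate {m : ℕ} (a : EuclideanSpace ℝ (Fin (m + 1))) (u : Fin m → ℝ) :
    liftPt a.ofLp u ∈ (a + ·) '' stdParaboloid (m + 1) := by
  refine ⟨liftPt a.ofLp u - a, ⟨WithLp.toLp 2 fun i : Fin m => u i - a i.castSucc, ?_⟩, by simp⟩
  funext j
  refine Fin.lastCases ?_ (fun i => ?_) j
  · simp [EuclideanSpace.real_norm_sq_eq]
  · simp

lemma dimH_le_dimH_liftPt {m : ℕ} (a : Fin (m + 1) → ℝ) (K : Set (Fin m → ℝ)) :
    dimH K ≤ dimH (liftPt a '' K) := by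
  have hL : LipschitzWith 1
      fun (x : EuclideanSpace ℝ (Fin (m + 1))) (i : Fin m) => x i.castSucc := by
    refine LipschitzWith.of_dist_le_mul fun x y => ?_
    rw [NNReal.coe_one, one_mul, dist_pi_le_iff dist_nonneg]
    intro i
    rw [dist_eq_norm x y, Real.dist_eq]
    exact PiLp.norm_apply_le (x - y) i.castSucc
  have h := hL.dimH_image_le (liftPt a '' K)
  rw [Set.image_image] at h
  simpa using h

lemma trapSet_subset_Icc {m : ℕ} {θ : ℝ} (P : Scales m θ) (Good : ℕ → Set (Fin m → ℕ)) :
    trapSet P Good ⊆ Set.Icc 0 1 := by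
  intro u hu
  obtain ⟨n, -, hn, hu⟩ := hu 0
  refine ⟨fun i => le_trans (by positivity) (hu i).1, fun i => (hu i).2.trans ?_⟩
  have h1 : (1 : ℝ) / 2 ^ P.B (0 + 1) ≤ 1 / 2 ^ P.A 0 :=
    one_div_le_one_div_of_le (by positivity) (pow_le_pow_right₀ (by norm_num) (P.lt_B 0).le)
  have h2 : (n i : ℝ) + 1 ≤ 2 ^ P.A 0 := by exact_mod_cast hn i
  calc (n i : ℝ) / 2 ^ P.A 0 + 1 / 2 ^ P.B (0 + 1) ≤ n i / 2 ^ P.A 0 + 1 / 2 ^ P.A 0 := by gcongr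
    _ = (n i + 1) / 2 ^ P.A 0 := by ring
    _ ≤ 1 := by rw [div_le_one (by positivity)]; exact h2

lemma isCompact_trapSet {m : ℕ} {θ : ℝ} (P : Scales m θ) (Good : ℕ → Set (Fin m → ℕ)) :
    IsCompact (trapSet P Good) := by
  refine isCompact_Icc.of_isClosed_subset ?_ (trapSet_subset_Icc P Good)
  have : trapSet P Good = ⋂ k, ⋃ n ∈ {n | n ∈ Good k ∧ ∀ i, n i < 2 ^ P.A k},
      Set.univ.pi fun i => Set.Icc ((n i : ℝ) / 2 ^ P.A k)
        (n i / 2 ^ P.A k + 1 / 2 ^ P.B (k + 1)) := by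
    ext u
    simp only [trapSet, Set.mem_ofPred_eq, Set.mem_iInter, Set.mem_iUnion, Set.mem_univ_pi,
      exists_prop, and_assoc]
  rw [this]
  refine isClosed_iInter fun k => Set.Finite.isClosed_biUnion ?_ fun n _ =>
    isClosed_set_pi fun i _ => isClosed_Icc
  refine (Fintype.piFinset fun _ : Fin m => Finset.range (2 ^ P.A k)).finite_toSet.subset ?_
  intro n hn
  simpa using hn.2

/-! ### The dot product set is null -/

/-- Every coordinate of a lifted point is close to the lattice of each stage. -/
lemma exists_int_near_liftPt {m : ℕ} {θ : ℝ} (P : Scales m θ) {a : Fin (m + 1) → ℝ}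
    (ha : ∀ j, a j ∈ Set.Ioc (0 : ℝ) 1) {u : Fin m → ℝ} (hu : u ∈ trapSet P (goodPts P a))
    (k : ℕ) : ∃ z : Fin (m + 1) → ℤ, ∀ j,
      |liftPt a u j - z j / 2 ^ P.A k| ≤ (2 * m + 1) / 2 ^ P.B (k + 1) := by
  have hu01 := trapSet_subset_Icc P _ hu
  obtain ⟨n, hgood, hn, hun⟩ := hu k
  set q : ℝ := 2 ^ P.A k with hq
  set δ : ℝ := 1 / 2 ^ P.B (k + 1) with hδ
  have hq0 : 0 < q := by positivity
  have hδ0 : 0 < δ := by positivity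
  have hd : ∀ i, |u i - n i / q| ≤ δ := fun i => by
    rw [abs_le]; constructor <;> linarith [(hun i).1, (hun i).2]
  refine ⟨fun j => Fin.lastCases (motive := fun _ => ℤ) ⌊phase (2 ^ P.A k) n a⌋
    (fun i => (n i : ℤ)) j, fun j => ?_⟩
  have hgoal : (2 * m + 1 : ℝ) / 2 ^ P.B (k + 1) = (2 * m + 1) * δ := by rw [hδ]; ring
  rw [hgoal]
  refine Fin.lastCases ?_ (fun i => ?_) j
  · simp only [Fin.lastCases_last, liftPt_last]
    -- the height over the lattice point `n / q` is `phase / q`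
    set H : ℝ := a (Fin.last m) + ∑ i : Fin m, ((n i : ℝ) / q - a i.castSucc) ^ 2 with hH
    have hphase : phase (2 ^ P.A k) n a = q * H := by simp [phase, hH, hq]
    have hfr : Int.fract (q * H) < 1 / 2 ^ (P.B (k + 1) - P.A k) := by
      rw [← hphase]; exact hgood
    have hδq : 1 / 2 ^ (P.B (k + 1) - P.A k) = q * δ := by
      rw [hq, hδ, ← Nat.sub_add_cancel (P.lt_B k).le, pow_add, Nat.add_sub_cancel]
      field_simp
    rw [hδq] at hfr
    have h1 : |H - ⌊q * H⌋ / q| ≤ δ := by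
      have : H - ⌊q * H⌋ / q = Int.fract (q * H) / q := by
        rw [← Int.self_sub_floor]; field_simp
      rw [this, abs_of_nonneg (div_nonneg (Int.fract_nonneg _) hq0.le), div_le_iff₀ hq0]
      linarith
    have h2 : |a (Fin.last m) + ∑ i : Fin m, (u i - a i.castSucc) ^ 2 - H| ≤ 2 * m * δ := by
      have : a (Fin.last m) + ∑ i : Fin m, (u i - a i.castSucc) ^ 2 - H
          = ∑ i : Fin m, ((u i - n i / q) * (u i + n i / q - 2 * a i.castSucc)) := by
        rw [hH, add_sub_add_left_eq_sub, ← Finset.sum_sub_distrib]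
        exact Finset.sum_congr rfl fun i _ => by ring
      rw [this]
      refine (Finset.abs_sum_le_sum_abs _ _).trans ?_
      have hb : ∀ i ∈ Finset.univ, |(u i - n i / q) * (u i + n i / q - 2 * a i.castSucc)|
          ≤ δ * 2 := fun i _ => by
        rw [abs_mul]
        refine mul_le_mul (hd i) ?_ (abs_nonneg _) hδ0.le
        have h3 : (0 : ℝ) ≤ n i / q := by positivity
        have h4 := (hun i).1
        have h5 := hu01.1 i
        have h6 := hu01.2 i
        have h7 := ha i.castSucc
        simp only [Pi.zero_apply, Pi.one_apply] at h5 h6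
        rw [abs_le]; constructor <;> linarith [h7.1, h7.2]
      refine (Finset.sum_le_sum hb).trans (le_of_eq ?_)
      simp; ring
    rw [hphase]
    calc _ ≤ _ := abs_sub_le _ H _
      _ ≤ 2 * m * δ + δ := add_le_add h2 h1
      _ = _ := by ring
  · simp only [Fin.lastCases_castSucc, liftPt_castSucc, Int.cast_natCast]
    refine (hd i).trans ?_
    have : (0 : ℝ) ≤ m := by positivity
    nlinarith

lemma abs_liftPt_le {m : ℕ} {a : Fin (m + 1) → ℝ} (ha : ∀ j, a j ∈ Set.Ioc (0 : ℝ) 1)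
    {u : Fin m → ℝ} (hu : u ∈ Set.Icc (0 : Fin m → ℝ) 1) (j : Fin (m + 1)) :
    |liftPt a u j| ≤ m + 1 := by
  refine Fin.lastCases ?_ (fun i => ?_) j
  · have h1 : ∀ i ∈ Finset.univ, (u i - a i.castSucc) ^ 2 ≤ 1 := fun i _ => by
      have h5 := hu.1 i
      have h6 := hu.2 i
      have h7 := ha i.castSucc
      simp only [Pi.zero_apply, Pi.one_apply] at h5 h6
      rw [sq_le_one_iff_abs_le_one, abs_le]; constructor <;> linarith [h7.1, h7.2]
    have h2 := Finset.sum_le_sum h1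
    have h3 : 0 ≤ ∑ i : Fin m, (u i - a i.castSucc) ^ 2 := Finset.sum_nonneg fun i _ => sq_nonneg _
    have h4 := ha (Fin.last m)
    simp only [Finset.sum_const, Finset.card_univ, Fintype.card_fin, nsmul_eq_mul, mul_one] at h2
    rw [liftPt_last, abs_of_nonneg (by linarith [h4.1])]
    linarith [h4.2]
  · have h5 := hu.1 i
    have h6 := hu.2 i
    simp only [Pi.zero_apply, Pi.one_apply] at h5 h6
    rw [liftPt_castSucc, abs_of_nonneg h5]
    have : (0 : ℝ) ≤ m := by positivity
    linarith

/-- If all coordinates of `x` and `y` are near `q⁻¹ ℤ`, then `x · y` is near `q⁻² ℤ`. -/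
lemma abs_dot_sub_le {l : ℕ} {x y : Fin l → ℝ} {z w : Fin l → ℤ} {q δ H : ℝ}
    (hδ : 0 ≤ δ) (hx : ∀ j, |x j| ≤ H) (hy : ∀ j, |y j| ≤ H)
    (hz : ∀ j, |x j - z j / q| ≤ δ) (hw : ∀ j, |y j - w j / q| ≤ δ) :
    |∑ j, x j * y j - ((∑ j, z j * w j : ℤ) : ℝ) / q ^ 2| ≤ l * ((2 * H + δ) * δ) := by
  have : ∑ j, x j * y j - ((∑ j, z j * w j : ℤ) : ℝ) / q ^ 2
      = ∑ j, ((x j - z j / q) * y j + (x j - (x j - z j / q)) * (y j - w j / q)) := by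
    push_cast
    rw [Finset.sum_div, ← Finset.sum_sub_distrib]
    refine Finset.sum_congr rfl fun j _ => ?_
    rw [pow_two, mul_div_mul_comm]; ring
  rw [this]
  refine (Finset.abs_sum_le_sum_abs _ _).trans ?_
  have hb : ∀ j ∈ Finset.univ,
      |(x j - z j / q) * y j + (x j - (x j - z j / q)) * (y j - w j / q)|
        ≤ (2 * H + δ) * δ := fun j _ => by
    have hH : 0 ≤ H := (abs_nonneg _).trans (hx j)
    calc _ ≤ |x j - z j / q| * |y j| + |x j - (x j - z j / q)| * |y j - w j / q| := by
          rw [← abs_mul, ← abs_mul]; exact abs_add_le _ _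
      _ ≤ δ * H + (H + δ) * δ := by
          gcongr
          · exact hz j
          · exact hy j
          · exact (abs_sub _ _).trans (add_le_add (hx j) (hz j))
          · exact hw j
      _ = _ := by ring
  refine (Finset.sum_le_sum hb).trans (le_of_eq ?_)
  simp

/-- A bounded set that lies, for every `k`, within `C / 2^(B k)` of the lattice `4^(-A k) ℤ` is
null, since it is covered by `O(4^(A k))` intervals of length `O(2^(-B k))`. -/
lemma volume_eq_zero_of_near_lattice {E : Set ℝ} {A B : ℕ → ℕ} {C : ℝ}
    (hC : 0 ≤ C) (hAB : ∀ k, 2 * A k + k ≤ B k) (hE : ∀ t ∈ E, |t| ≤ C)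
    (hnear : ∀ k, ∀ t ∈ E, ∃ N : ℤ, |t - N / (2 ^ A k) ^ 2| ≤ C / 2 ^ B k) : volume E = 0 := by
  obtain ⟨K, hK⟩ := exists_nat_ge (2 * C)
  have key : ∀ k : ℕ, volume E ≤ ENNReal.ofReal ((2 * K + 1) * (2 * C) * (1 / 2) ^ k) := by
    intro k
    set q : ℕ := (2 ^ A k) ^ 2 with hq
    have hq1 : (1 : ℝ) ≤ q := by
      rw [hq]; exact_mod_cast Nat.one_le_two_pow.trans (Nat.le_self_pow two_ne_zero _)
    have hcov : E ⊆ ⋃ N ∈ Finset.Icc (-((K * q : ℕ) : ℤ)) ((K * q : ℕ) : ℤ),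
        Metric.closedBall ((N : ℝ) / q) (C / 2 ^ B k) := by
      intro t ht
      obtain ⟨N, hN⟩ := hnear k t ht
      have hqe : ((2 : ℝ) ^ A k) ^ 2 = q := by rw [hq]; push_cast; rfl
      rw [hqe] at hN
      refine Set.mem_biUnion (x := N) ?_ (by rw [Metric.mem_closedBall, Real.dist_eq]; exact hN)
      have h1 : C / 2 ^ B k ≤ C := div_le_self hC (one_le_pow₀ (by norm_num))
      have h2 : |(N : ℝ) / q| ≤ K := by
        have := abs_sub_abs_le_abs_sub ((N : ℝ) / q) t
        rw [abs_sub_comm] at this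
        linarith [hE t ht]
      rw [abs_div, Nat.abs_cast, div_le_iff₀ (by linarith), abs_le] at h2
      rw [Finset.coe_Icc]
      constructor
      · have := h2.1; exact_mod_cast this
      · have := h2.2; exact_mod_cast this
    refine (measure_mono hcov).trans ((measure_biUnion_finset_le _ _).trans ?_)
    simp only [Real.volume_closedBall, Finset.sum_const, Int.card_Icc]
    have hcard : ((K * q : ℕ) : ℤ) + 1 - -((K * q : ℕ) : ℤ) = ((2 * (K * q) + 1 : ℕ) : ℤ) := by
      push_cast; ring
    rw [hcard, Int.toNat_natCast, nsmul_eq_mul, ← ENNReal.ofReal_natCast,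
      ← ENNReal.ofReal_mul (by positivity)]
    refine ENNReal.ofReal_le_ofReal ?_
    have h3 : ((2 * (K * q) + 1 : ℕ) : ℝ) ≤ (2 * K + 1) * q := by push_cast; nlinarith
    have h4 : (q : ℝ) * (1 / 2 ^ B k) ≤ (1 / 2) ^ k := by
      rw [one_div_pow, mul_one_div, div_le_div_iff₀ (by positivity) (by positivity), one_mul, hq]
      push_cast
      rw [← pow_mul, ← pow_add]
      exact pow_le_pow_right₀ (by norm_num) (by linarith [hAB k])
    calc _ ≤ (2 * K + 1) * q * (2 * (C / 2 ^ B k)) := by gcongr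
      _ = (2 * K + 1) * (2 * C) * (q * (1 / 2 ^ B k)) := by ring
      _ ≤ _ := by gcongr
  have hlim : Filter.Tendsto (fun k : ℕ => ENNReal.ofReal ((2 * K + 1) * (2 * C) * (1 / 2) ^ k))
      Filter.atTop (nhds 0) := by
    rw [← ENNReal.ofReal_zero]
    refine ENNReal.tendsto_ofReal ?_
    have := (tendsto_pow_atTop_nhds_zero_of_lt_one (r := (1 / 2 : ℝ)) (by norm_num)
      (by norm_num)).const_mul ((2 * K + 1) * (2 * C))
    simpa using this
  exact le_antisymm (ge_of_tendsto' hlim key) bot_le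

lemma volume_dotSet_liftPt {m : ℕ} {θ : ℝ} (P : Scales m θ) {a : Fin (m + 1) → ℝ}
    (ha : ∀ j, a j ∈ Set.Ioc (0 : ℝ) 1) :
    volume (dotSet (liftPt a '' trapSet P (goodPts P a))) = 0 := by
  -- the constant given by `abs_dot_sub_le` with `H = m + 1` and `δ = (2 m + 1) / 2^B`
  set C : ℝ := (m + 1) * ((2 * (m + 1) + (2 * m + 1)) * (2 * m + 1)) with hC
  have hC0 : 0 ≤ C := by positivity
  have hinner : ∀ x y : EuclideanSpace ℝ (Fin (m + 1)), ⟪x, y⟫ = ∑ j, x j * y j := fun x y => by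
    simp [PiLp.inner_apply, mul_comm]
  refine volume_eq_zero_of_near_lattice (A := P.A) (B := fun k => P.B (k + 1)) hC0 P.gap ?_ ?_
  · rintro _ ⟨_, ⟨u, hu, rfl⟩, _, ⟨v, hv, rfl⟩, rfl⟩
    rw [hinner]
    refine (Finset.abs_sum_le_sum_abs _ _).trans ?_
    have hb : ∀ j ∈ Finset.univ, |liftPt a u j * liftPt a v j| ≤ ((m : ℝ) + 1) * (m + 1) :=
      fun j _ => by
        rw [abs_mul]
        exact mul_le_mul (abs_liftPt_le ha (trapSet_subset_Icc P _ hu) j)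
          (abs_liftPt_le ha (trapSet_subset_Icc P _ hv) j) (abs_nonneg _) (by positivity)
    refine (Finset.sum_le_sum hb).trans ?_
    simp only [Finset.sum_const, Finset.card_univ, Fintype.card_fin, nsmul_eq_mul, hC]
    push_cast
    have : (0 : ℝ) ≤ m := by positivity
    gcongr <;> nlinarith
  · rintro k _ ⟨_, ⟨u, hu, rfl⟩, _, ⟨v, hv, rfl⟩, rfl⟩
    obtain ⟨z, hz⟩ := exists_int_near_liftPt P ha hu k
    obtain ⟨w, hw⟩ := exists_int_near_liftPt P ha hv k
    refine ⟨∑ j, z j * w j, ?_⟩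
    rw [hinner]
    refine (abs_dot_sub_le (by positivity) (abs_liftPt_le ha (trapSet_subset_Icc P _ hu))
      (abs_liftPt_le ha (trapSet_subset_Icc P _ hv)) hz hw).trans ?_
    have h1 : (2 * m + 1 : ℝ) / 2 ^ P.B (k + 1) ≤ 2 * m + 1 :=
      div_le_self (by positivity) (one_le_pow₀ (by norm_num))
    push_cast
    calc _ ≤ ((m : ℝ) + 1) * ((2 * (m + 1) + (2 * m + 1)) * ((2 * m + 1) / 2 ^ P.B (k + 1))) := by
          gcongr
      _ = _ := by rw [hC]; ring

/-- For `d ≥ 4` and every sufficiently small `ε > 0` there is a set `J ⊆ ℝ^d` of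
positive Lebesgue measure such that each translated paraboloid `a + P_d` with `a ∈ J`
contains a compact subset of Hausdorff dimension at least `(d-2)/2 - ε` whose dot
product set has Lebesgue measure zero. -/
theorem translated_paraboloid_counterexamples
    (d : ℕ) (hd : 4 ≤ d) :
    ∃ ε₀ : ℝ, 0 < ε₀ ∧ ∀ ε : ℝ, 0 < ε → ε < ε₀ →
      ∃ J : Set (EuclideanSpace ℝ (Fin d)), 0 < volume J ∧
        ∀ a ∈ J, ∃ F : Set (EuclideanSpace ℝ (Fin d)),
          F ⊆ (a + ·) '' stdParaboloid d ∧ IsCompact F ∧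
          ENNReal.ofReal (((d : ℝ) - 2) / 2 - ε) ≤ dimH F ∧ volume (dotSet F) = 0 := by
  obtain ⟨M, rfl⟩ : ∃ M, d = M + 1 + 1 := ⟨d - 2, by omega⟩
  have hM : 2 ≤ M := by omega
  refine ⟨1, one_pos, fun ε hε _ => ?_⟩
  have hM' : (2 : ℝ) ≤ M := by exact_mod_cast hM
  obtain ⟨R₀, hR₀⟩ := exists_nat_ge ((M + 1 : ℝ) / ε)
  -- any `R ≥ (M + 1) / ε` makes the loss `(M + 1) / R` at most `ε`; `R ≥ 2 M` makes `S` positive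
  set R := R₀ + 2 * M with hR
  have hRpos : 0 < R := by omega
  have hbig : 2 * (M + 1) < M * R := by rw [hR]; nlinarith
  obtain ⟨S, hS⟩ : ∃ S, S + 2 * (M + 1) = M * R := ⟨M * R - 2 * (M + 1), by omega⟩
  have hSpos : 0 < S := by omega
  obtain ⟨P⟩ := exists_scales hM hRpos hS
  set θ : ℝ := (S : ℝ) / (2 * (M + 1) * R) with hθ
  have hRpos' : (0 : ℝ) < R := by exact_mod_cast hRpos
  have hSpos' : (0 : ℝ) < S := by exact_mod_cast hSpos
  have hS' : (S : ℝ) + 2 * (M + 1) = M * R := by exact_mod_cast hS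
  have hθ0 : 0 < θ := by positivity
  have hθ1 : θ ≤ 1 := by
    rw [hθ, div_le_one (by positivity)]; nlinarith
  have hdim : (((M + 1 + 1 : ℕ) : ℝ) - 2) / 2 - ε ≤ ((M + 1 : ℕ) : ℝ) * θ := by
    have h1 : ((M + 1 : ℕ) : ℝ) * θ = M / 2 - (M + 1) / R := by
      rw [hθ, eq_sub_of_add_eq hS']; push_cast; field_simp
    have h2 : ((M : ℝ) + 1) / R ≤ ε := by
      rw [div_le_iff₀ hRpos']
      rw [div_le_iff₀ hε] at hR₀
      have h3 : (R₀ : ℝ) ≤ R := by exact_mod_cast (by omega : R₀ ≤ R)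
      nlinarith
    rw [h1]; push_cast; linarith
  refine ⟨WithLp.ofLp ⁻¹' ((Set.univ.pi fun _ => Set.Ioc (0 : ℝ) 1) \ ⋃ k, badSet P k), ?_, ?_⟩
  · refine (volume_translates_pos P).trans_eq ?_
    exact ((EuclideanSpace.volume_preserving_symm_measurableEquiv_toLp
      (Fin (M + 1 + 1))).measure_preimage_equiv _).symm
  · rintro a ⟨ha, hbad⟩
    have ha' : ∀ j, a.ofLp j ∈ Set.Ioc (0 : ℝ) 1 := fun j => ha j (Set.mem_univ j)
    have hrich : Rich P (goodPts P a.ofLp) :=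
      rich_goodPts P fun k hk => hbad (Set.mem_iUnion.2 ⟨k, hk⟩)
    refine ⟨liftPt a.ofLp '' trapSet P (goodPts P a.ofLp), ?_,
      (isCompact_trapSet P _).image (continuous_liftPt _), ?_, volume_dotSet_liftPt P ha'⟩
    · rintro _ ⟨u, -, rfl⟩
      exact liftPt_mem_translate a u
    · exact (ENNReal.ofReal_le_ofReal hdim).trans
        ((hrich.le_dimH_trapSet hθ0 hθ1).trans (dimH_le_dimH_liftPt _ _))
end
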